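/- If β is a real root (i.e. p(β) = 0) belonging to Σ_λ, then the Marsden–Weinstein reduction N(λ,β) is a single point. -/

import Mathlib

open scoped BigOperators

noncomputable section

/-- A quiver with a finite vertex set `I` and a finite arrow set `A`;
`h a` and `t a` are the head and the tail of the arrow `a`. -/
structure FinQuiver where
  I : Type
  [fintypeI : Fintype I]
  [decEqI : DecidableEq I]
  A : Type
  [fintypeA : Fintype A]
  h : A → I
  t : A → I

attribute [instance] FinQuiver.fintypeI FinQuiver.decEqI FinQuiver.fintypeA

namespace FinQuiver

variable (Q : FinQuiver)

/-- Arrows of the double quiver `Q̄` : every arrow `a : i → j` of `Q` (as `Sum.inl a`)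
together with a reverse arrow `a* : j → i` (as `Sum.inr a`). -/
@[reducible] def DA : Type := Q.A ⊕ Q.A

instance : Fintype Q.DA := inferInstanceAs (Fintype (Q.A ⊕ Q.A))

/-- Head of an arrow of the double quiver. -/
@[reducible] def dh : Q.DA → Q.I := fun a => match a with
  | Sum.inl a => Q.h a
  | Sum.inr a => Q.t a

/-- Tail of an arrow of the double quiver. -/
@[reducible] def dt : Q.DA → Q.I := fun a => match a with
  | Sum.inl a => Q.t a
  | Sum.inr a => Q.h a

/-- The symmetric bilinear form
`(α,β) = ∑_{i∈I} 2 α_i β_i − ∑_{a∈Q̄} α_{h(a)} β_{t(a)}` on `ℤ^I`. -/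
def bil (α β : Q.I → ℤ) : ℤ :=
  (∑ i, 2 * α i * β i) - ∑ a : Q.DA, α (Q.dh a) * β (Q.dt a)

/-- `p(α) = 1 − q(α) = 1 − α·α + ∑_{a ∈ Q} α_{t(a)} α_{h(a)}`. -/
def pp (α : Q.I → ℤ) : ℤ :=
  1 - (∑ i, α i * α i) + ∑ a : Q.A, α (Q.t a) * α (Q.h a)

/-- The coordinate vector `ε_i` at a vertex `i`. -/
def ev (i : Q.I) : Q.I → ℤ := fun j => if j = i then 1 else 0

/-- The coordinate vector of a vertex, as a vector of natural numbers. -/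
def evN (i : Q.I) : Q.I → ℕ := fun j => if j = i then 1 else 0

/-- A vertex is loopfree if no arrow has both its head and its tail there. -/
def Loopfree (i : Q.I) : Prop := ∀ a : Q.A, ¬ (Q.h a = i ∧ Q.t a = i)

/-- The reflection `s_i(α) = α − (α,ε_i) ε_i` at a (loopfree) vertex `i`. -/
def refl (i : Q.I) (α : Q.I → ℤ) : Q.I → ℤ := α - Q.bil α (Q.ev i) • Q.ev i

/-- Two vertices are joined by some arrow. -/
def Adj (i j : Q.I) : Prop :=
  ∃ a : Q.A, (Q.h a = i ∧ Q.t a = j) ∨ (Q.h a = j ∧ Q.t a = i)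

/-- The quiver is connected. -/
def Connected : Prop := ∀ i j : Q.I, Relation.ReflTransGen Q.Adj i j

/-- The support of the vector `α` is connected in `Q`. -/
def SuppConnected (α : Q.I → ℤ) : Prop :=
  ∀ i j : Q.I, α i ≠ 0 → α j ≠ 0 →
    Relation.ReflTransGen (fun x y => α x ≠ 0 ∧ α y ≠ 0 ∧ Q.Adj x y) i j

/-- The fundamental region: nonzero nonnegative vectors with connected support
such that `(α, ε_i) ≤ 0` for every vertex `i`. -/
def InFund (α : Q.I → ℤ) : Prop :=
  α ≠ 0 ∧ (∀ i, 0 ≤ α i) ∧ Q.SuppConnected α ∧ ∀ i, Q.bil α (Q.ev i) ≤ 0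

/-- The roots of the Kac root system attached to `Q` : the real roots form the orbit
of the simple roots (coordinate vectors at loopfree vertices) under the reflections at
loopfree vertices, and the imaginary roots form the orbit of `±(fundamental region)`
under these reflections. -/
inductive IsRoot : (Q.I → ℤ) → Prop
  | simple (i : Q.I) (hi : Q.Loopfree i) : IsRoot (Q.ev i)
  | fund (α : Q.I → ℤ) (hα : Q.InFund α) : IsRoot α
  | neg_fund (α : Q.I → ℤ) (hα : Q.InFund α) : IsRoot (-α)
  | reflect (i : Q.I) (hi : Q.Loopfree i) (α : Q.I → ℤ) (hα : IsRoot α) :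
      IsRoot (Q.refl i α)

/-- Positive roots: roots all of whose components are nonnegative. -/
def IsPosRoot (α : Q.I → ℤ) : Prop := Q.IsRoot α ∧ (∀ i, 0 ≤ α i) ∧ α ≠ 0

/-- The Tits form is positive semidefinite. -/
def PosSemidef : Prop := ∀ α : Q.I → ℤ, 0 ≤ Q.bil α α

/-- The Tits form is positive definite. -/
def PosDef : Prop := Q.PosSemidef ∧ ∀ α : Q.I → ℤ, Q.bil α α = 0 → α = 0

/-- Dynkin quivers: connected, with positive definite Tits form. -/
def IsDynkin : Prop := Q.Connected ∧ Q.PosDef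

/-- Extended Dynkin quivers: connected, with positive semidefinite but not
positive definite Tits form. -/
def IsExtDynkin : Prop := Q.Connected ∧ Q.PosSemidef ∧ ¬ Q.PosDef

/-- `δ` is the minimal positive imaginary root of an extended Dynkin quiver:
the minimal nonzero nonnegative vector in the radical of the Tits form. -/
def IsMinImag (δ : Q.I → ℤ) : Prop :=
  (∀ i, 0 ≤ δ i) ∧ δ ≠ 0 ∧ (∀ i, Q.bil δ (Q.ev i) = 0) ∧
    ∀ β : Q.I → ℤ, (∀ i, 0 ≤ β i) → β ≠ 0 → (∀ i, Q.bil β (Q.ev i) = 0) →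
      ∀ i, δ i ≤ β i

/-- The subquiver of `Q` on a subset `S` of vertices and a subset `B` of arrows. -/
def restrict (S : Set Q.I) (B : Set Q.A) (hh : ∀ a ∈ B, Q.h a ∈ S)
    (ht : ∀ a ∈ B, Q.t a ∈ S) : FinQuiver :=
  { I := S
    fintypeI := Fintype.ofFinite S
    decEqI := Classical.decEq _
    A := B
    fintypeA := Fintype.ofFinite B
    h := fun a => ⟨Q.h a.1, hh a.1 a.2⟩
    t := fun a => ⟨Q.t a.1, ht a.1 a.2⟩ }

/-- The support quiver of a vector: the full subquiver on the support of `β`. -/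
def suppQuiver (β : Q.I → ℤ) : FinQuiver :=
  Q.restrict {i | β i ≠ 0} {a | β (Q.h a) ≠ 0 ∧ β (Q.t a) ≠ 0}
    (fun _ ha => ha.1) (fun _ ha => ha.2)

/-- A dimension vector (of natural numbers), viewed in `ℤ^I`. -/
def toZ (α : Q.I → ℕ) : Q.I → ℤ := fun i => (α i : ℤ)

/-- An oriented cycle in the double quiver `Q̄`, consisting of `n+1` arrows,
the tail of each arrow being the head of the (cyclically) next one. -/
structure Cyc (Q' : FinQuiver) where
  n : ℕ
  ar : Fin (n + 1) → Q'.DA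
  compat : ∀ i : Fin (n + 1), Q'.dt (ar i) = Q'.dh (ar (i + 1))

section WithField

variable (K : Type) [Field K]

/-- `λ·α = ∑_i λ_i α_i`. -/
def pair (l : Q.I → K) (α : Q.I → ℤ) : K := ∑ i, l i * (α i : K)

/-- `R_λ^+`, the set of positive roots `α` with `λ·α = 0`. -/
def Rplus (l : Q.I → K) : Set (Q.I → ℤ) :=
  {α | Q.IsPosRoot α ∧ Q.pair K l α = 0}

/-- `ℕ R_λ^+`, the set of sums (including the empty sum `0`) of elements of `R_λ^+`. -/
def NRplus (l : Q.I → K) : Set (Q.I → ℤ) :=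
  (AddSubmonoid.closure (Q.Rplus K l) : AddSubmonoid (Q.I → ℤ))

/-- `Σ_λ` : the elements `α ∈ R_λ^+` with `p(α) > ∑ p(β⁽ᵗ⁾)` for every decomposition
of `α` as a sum of at least two elements `β⁽ᵗ⁾` of `R_λ^+`. -/
def SigmaSet (l : Q.I → K) : Set (Q.I → ℤ) :=
  {α | α ∈ Q.Rplus K l ∧
    ∀ (n : ℕ) (β : Fin n → (Q.I → ℤ)), 2 ≤ n → (∀ j, β j ∈ Q.Rplus K l) →
      α = ∑ j, β j → (∑ j, Q.pp (β j)) < Q.pp α}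

/-- The dual reflection `r_i(λ)_j = λ_j − (ε_i,ε_j) λ_i`. -/
def coRefl (i : Q.I) (l : Q.I → K) : Q.I → K :=
  fun j => l j - (Q.bil (Q.ev i) (Q.ev j) : ℤ) * l i

/-- A single admissible reflection applied to the pair `(λ, α)`:
a reflection at a loopfree vertex `i` with `λ_i ≠ 0`. -/
def AdmStep (x y : (Q.I → K) × (Q.I → ℤ)) : Prop :=
  ∃ i : Q.I, Q.Loopfree i ∧ x.1 i ≠ 0 ∧ y.1 = Q.coRefl K i x.1 ∧ y.2 = Q.refl i x.2

/-- `(ν,β)` is obtained from `(λ,α)` by a sequence of admissible reflections: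
the two pairs lie in the same class of the equivalence relation generated by
admissible reflections. -/
def AdmEquiv (x y : (Q.I → K) × (Q.I → ℤ)) : Prop :=
  Relation.EqvGen (Q.AdmStep K) x y

/-- The space `Rep(Q̄,α)` of representations of the double quiver. -/
def Rep (α : Q.I → ℕ) : Type :=
  ∀ a : Q.DA, Matrix (Fin (α (Q.dh a))) (Fin (α (Q.dt a))) K

/-- The moment map
`μ_α(x)_i = ∑_{a∈Q, h(a)=i} x_a x_{a*} − ∑_{a∈Q, t(a)=i} x_{a*} x_a`. -/
def moment (α : Q.I → ℕ) (x : Q.Rep K α) (i : Q.I) :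
    Matrix (Fin (α i)) (Fin (α i)) K :=
  (∑ a : Q.A, if h : Q.h a = i then
      (x (Sum.inl a) * x (Sum.inr a)).submatrix
        (Fin.cast (congrArg α h).symm) (Fin.cast (congrArg α h).symm)
    else 0)
  - ∑ a : Q.A, if h : Q.t a = i then
      (x (Sum.inr a) * x (Sum.inl a)).submatrix
        (Fin.cast (congrArg α h).symm) (Fin.cast (congrArg α h).symm)
    else 0

/-- The fibre `μ_α^{-1}(λ)` of the moment map over (the central element
corresponding to) `λ`. -/
def MomentFiber (l : Q.I → K) (α : Q.I → ℕ) : Set (Q.Rep K α) :=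
  {x | ∀ i : Q.I, Q.moment K α x i = l i • (1 : Matrix (Fin (α i)) (Fin (α i)) K)}

/-- The group `∏_i GL(α_i,K)`; it acts on `Rep(Q̄,α)` by conjugation, with the same
orbits and the same invariant functions as `G(α) = (∏_i GL(α_i,K))/K^*`. -/
def Gl (α : Q.I → ℕ) : Type := ∀ i : Q.I, Matrix.GeneralLinearGroup (Fin (α i)) K

/-- The conjugation action of `∏_i GL(α_i,K)` on `Rep(Q̄,α)`. -/
def glAct (α : Q.I → ℕ) (g : Q.Gl K α) (x : Q.Rep K α) : Q.Rep K α :=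
  fun a => (g (Q.dh a) : Matrix (Fin (α (Q.dh a))) (Fin (α (Q.dh a))) K) * x a *
    (((g (Q.dt a))⁻¹ : Matrix.GeneralLinearGroup (Fin (α (Q.dt a))) K) :
      Matrix (Fin (α (Q.dt a))) (Fin (α (Q.dt a))) K)

/-- Coordinates on `Rep(Q̄,α)`: matrix entries. -/
def Coords (α : Q.I → ℕ) : Type :=
  Σ a : Q.DA, Fin (α (Q.dh a)) × Fin (α (Q.dt a))

/-- The coordinate ring `K[V]` of a subset `V` of `Rep(Q̄,α)` : the algebra of
`K`-valued functions on `V` which are restrictions of polynomial functions. -/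
def fnRing (α : Q.I → ℕ) (V : Set (Q.Rep K α)) : Subalgebra K (↥V → K) :=
  (MvPolynomial.aeval
    (fun c : Q.Coords α => fun v : ↥V => v.1 c.1 c.2.1 c.2.2) :
    MvPolynomial (Q.Coords α) K →ₐ[K] (↥V → K)).range

end WithField

end FinQuiver

/-- The subalgebra of functions invariant under a relation (e.g. the orbit
relation of a group action). -/
def relInv (K : Type) [Field K] {V : Type} (R : V → V → Prop) :
    Subalgebra K (V → K) where
  carrier := {f | ∀ x y : V, R x y → f x = f y}
  mul_mem' := by
    intro f g hf hg x y hxy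
    simp only [Pi.mul_apply, hf x y hxy, hg x y hxy]
  one_mem' := fun x y _ => rfl
  add_mem' := by
    intro f g hf hg x y hxy
    simp only [Pi.add_apply, hf x y hxy, hg x y hxy]
  zero_mem' := fun x y _ => rfl
  algebraMap_mem' := fun c x y _ => rfl

namespace FinQuiver

variable (Q : FinQuiver) (K : Type) [Field K]

/-- The coordinate ring of the Marsden–Weinstein reduction
`N(λ,α) = μ_α^{-1}(λ) ⫽ G(α)` : the `G(α)`-invariant functions in the coordinate
ring of `μ_α^{-1}(λ)`.  Two such reductions are isomorphic as (affine) varieties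
exactly when these `K`-algebras are isomorphic. -/
def InvRing (l : Q.I → K) (α : Q.I → ℕ) :
    Subalgebra K (↥(Q.MomentFiber K l α) → K) :=
  Q.fnRing K α (Q.MomentFiber K l α) ⊓
    relInv K (fun x y : ↥(Q.MomentFiber K l α) =>
      ∃ g : Q.Gl K α, y.1 = Q.glAct K α g x.1)

/-- Index type for a product `∏_t X_t^{m_t}`. -/
@[reducible] def SymIdx (s : ℕ) (m : Fin s → ℕ) : Type := Σ t : Fin s, Fin (m t)

/-- The product `∏_{t} Rep(Q̄, d_t)^{m_t}` of representation spaces. -/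
def SymRep (s : ℕ) (m : Fin s → ℕ) (d : Fin s → (Q.I → ℕ)) : Type :=
  ∀ p : SymIdx s m, Q.Rep K (d p.1)

/-- The product `∏_t μ_{d_t}^{-1}(λ)^{m_t}` of moment map fibres. -/
def SymFiber (s : ℕ) (m : Fin s → ℕ) (d : Fin s → (Q.I → ℕ)) (l : Q.I → K) :
    Set (Q.SymRep K s m d) :=
  {x | ∀ p : SymIdx s m, x p ∈ Q.MomentFiber K l (d p.1)}

/-- Polynomial functions on the product of fibres. -/
def symFnRing (s : ℕ) (m : Fin s → ℕ) (d : Fin s → (Q.I → ℕ)) (l : Q.I → K) :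
    Subalgebra K (↥(Q.SymFiber K s m d l) → K) :=
  (MvPolynomial.aeval
    (fun c : Σ p : SymIdx s m, Q.Coords (d p.1) =>
      fun v : ↥(Q.SymFiber K s m d l) => v.1 c.1 c.2.1 c.2.2.1 c.2.2.2) :
    MvPolynomial (Σ p : SymIdx s m, Q.Coords (d p.1)) K →ₐ[K]
      (↥(Q.SymFiber K s m d l) → K)).range

/-- The componentwise action of the product of the groups `∏ GL(d_t)^{m_t}`. -/
def symGlAct (s : ℕ) (m : Fin s → ℕ) (d : Fin s → (Q.I → ℕ))
    (g : ∀ p : SymIdx s m, Q.Gl K (d p.1)) (x : Q.SymRep K s m d) :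
    Q.SymRep K s m d :=
  fun p => Q.glAct K (d p.1) (g p) (x p)

/-- The action of `∏_t S_{m_t}` permuting the factors of each `X_t^{m_t}`. -/
def symPermAct (s : ℕ) (m : Fin s → ℕ) (d : Fin s → (Q.I → ℕ))
    (π : ∀ t : Fin s, Equiv.Perm (Fin (m t))) (x : Q.SymRep K s m d) :
    Q.SymRep K s m d :=
  fun p => x ⟨p.1, π p.1 p.2⟩

/-- The coordinate ring of the product of symmetric products
`∏_t S^{m_t} N(λ, d_t)` of Marsden–Weinstein reductions: functions on
`∏_t μ_{d_t}^{-1}(λ)^{m_t}` which are polynomial, invariant under all the groups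
`G(d_t)` acting on the separate factors, and symmetric under permutations of the
`m_t` factors of each type `t`. -/
def SymInvRing (s : ℕ) (m : Fin s → ℕ) (d : Fin s → (Q.I → ℕ)) (l : Q.I → K) :
    Subalgebra K (↥(Q.SymFiber K s m d l) → K) :=
  Q.symFnRing K s m d l ⊓
    relInv K (fun x y : ↥(Q.SymFiber K s m d l) =>
      ∃ g : ∀ p : SymIdx s m, Q.Gl K (d p.1), y.1 = Q.symGlAct K s m d g x.1) ⊓
    relInv K (fun x y : ↥(Q.SymFiber K s m d l) =>
      ∃ π : ∀ t : Fin s, Equiv.Perm (Fin (m t)), y.1 = Q.symPermAct K s m d π x.1)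

/-- The trace function `tr_p` of an oriented cycle `p` in `Q̄` :
`tr_p(x) = tr(x_{a_1} ⋯ x_{a_ℓ})`, written out via matrix entries. -/
def cycTr (α : Q.I → ℕ) (p : Q.Cyc) (x : Q.Rep K α) : K :=
  ∑ c : ∀ i : Fin (p.n + 1), Fin (α (Q.dh (p.ar i))),
    ∏ i : Fin (p.n + 1),
      x (p.ar i) (c i) (Fin.cast (congrArg α (p.compat i)).symm (c (i + 1)))

/-- `U` is a subrepresentation of the `Π^λ`-module given by the point
`x ∈ Rep(Q̄,α)` : a collection of subspaces stable under all the maps `x_a`. -/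
def SubRep (α : Q.I → ℕ) (x : Q.Rep K α)
    (U : ∀ i : Q.I, Submodule K (Fin (α i) → K)) : Prop :=
  ∀ a : Q.DA, ∀ v ∈ U (Q.dt a), (x a).mulVec v ∈ U (Q.dh a)

/-- The module given by `x` has the simple module `S_{i₀}` (dimension vector
`ε_{i₀}`, all arrows acting as zero) as a composition factor: it has a subquotient
of dimension vector `ε_{i₀}` on which all arrows act as zero. -/
def HasSFactor (α : Q.I → ℕ) (i0 : Q.I) (x : Q.Rep K α) : Prop :=
  ∃ U W : ∀ i : Q.I, Submodule K (Fin (α i) → K),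
    Q.SubRep K α x U ∧ Q.SubRep K α x W ∧ (∀ i, U i ≤ W i) ∧
    (∀ i, Module.finrank K (W i) =
      Module.finrank K (U i) + (if i = i0 then 1 else 0)) ∧
    (∀ a : Q.DA, Q.dh a = i0 → Q.dt a = i0 →
      ∀ v ∈ W (Q.dt a), (x a).mulVec v ∈ U (Q.dh a))

/-- `W/U` is a simple subquotient of the module given by `x`; the simple
subquotients of a module are, up to isomorphism, exactly its composition factors. -/
def SimpleSubquot (α : Q.I → ℕ) (x : Q.Rep K α)
    (U W : ∀ i : Q.I, Submodule K (Fin (α i) → K)) : Prop :=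
  Q.SubRep K α x U ∧ Q.SubRep K α x W ∧ (∀ i, U i ≤ W i) ∧ U ≠ W ∧
    ∀ V : ∀ i : Q.I, Submodule K (Fin (α i) → K),
      Q.SubRep K α x V → (∀ i, U i ≤ V i) → (∀ i, V i ≤ W i) → V = U ∨ V = W

/-- The direct sum map `∏_{j=1}^m Rep(Q̄,δ) → Rep(Q̄,mδ)` (block diagonal). -/
def dsMap (δ : Q.I → ℕ) (m : ℕ) (y : Fin m → Q.Rep K δ) :
    Q.Rep K (fun i => m * δ i) :=
  fun a => Matrix.of fun r c =>
    if (finProdFinEquiv.symm r).1 = (finProdFinEquiv.symm c).1 then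
      y (finProdFinEquiv.symm r).1 a (finProdFinEquiv.symm r).2
        (finProdFinEquiv.symm c).2
    else 0

end FinQuiver


namespace FinQuiver

section MomentBasics
variable {Q : FinQuiver} {K : Type} [Field K]

/-- The pairing of the moment map with a family of matrices. -/
theorem moment_trace (α : Q.I → ℕ) (x : Q.Rep K α)
    (M : ∀ i, Matrix (Fin (α i)) (Fin (α i)) K) :
    ∑ i, (Q.moment K α x i * M i).trace =
      ∑ a : Q.A, ((x (Sum.inl a) * x (Sum.inr a) * M (Q.h a)).trace
        - (x (Sum.inr a) * x (Sum.inl a) * M (Q.t a)).trace) := by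
  have key : ∀ (j : Q.I) (N : Matrix (Fin (α j)) (Fin (α j)) K),
      ∑ i, ((if h : j = i then N.submatrix (Fin.cast (congrArg α h).symm)
        (Fin.cast (congrArg α h).symm) else 0) * M i).trace = (N * M j).trace := by
    intro j N
    rw [Finset.sum_eq_single j]
    · simp
    · intro i _ hij
      rw [dif_neg (Ne.symm hij)]; simp
    · simp
  simp only [moment, sub_mul, Finset.sum_mul, Matrix.trace_sub, Matrix.trace_sum,
    Finset.sum_sub_distrib]
  congr 1
  · rw [Finset.sum_comm]
    exact Finset.sum_congr rfl fun a _ => key _ (x (Sum.inl a) * x (Sum.inr a))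
  · rw [Finset.sum_comm]
    exact Finset.sum_congr rfl fun a _ => key _ (x (Sum.inr a) * x (Sum.inl a))

/-- Intertwiners of representations intertwine moment maps. -/
theorem moment_intertwine (α γ : Q.I → ℕ) (x : Q.Rep K α) (y : Q.Rep K γ)
    (f : ∀ i, Matrix (Fin (γ i)) (Fin (α i)) K)
    (hf : ∀ c : Q.DA, f (Q.dh c) * x c = y c * f (Q.dt c)) (i : Q.I) :
    f i * Q.moment K α x i = Q.moment K γ y i * f i := by
  have hl : ∀ a : Q.A, f (Q.h a) * x (Sum.inl a) = y (Sum.inl a) * f (Q.t a) :=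
    fun a => hf (Sum.inl a)
  have hr : ∀ a : Q.A, f (Q.t a) * x (Sum.inr a) = y (Sum.inr a) * f (Q.h a) :=
    fun a => hf (Sum.inr a)
  simp only [moment, Matrix.mul_sub, Matrix.sub_mul]
  rw [Matrix.mul_sum, Matrix.mul_sum, Matrix.sum_mul, Matrix.sum_mul]
  congr 1
  · refine Finset.sum_congr rfl fun a _ => ?_
    split_ifs with h
    · subst h
      simp only [Fin.cast_refl, Matrix.submatrix_id_id]
      rw [← Matrix.mul_assoc, hl, Matrix.mul_assoc, hr, Matrix.mul_assoc]
    · simp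
  · refine Finset.sum_congr rfl fun a _ => ?_
    split_ifs with h
    · subst h
      simp only [Fin.cast_refl, Matrix.submatrix_id_id]
      rw [← Matrix.mul_assoc, hr, Matrix.mul_assoc, hl, Matrix.mul_assoc]
    · simp

/-- The fibre over `l` in dimension `α` is nonempty. -/
def Nn (l : Q.I → K) (α : Q.I → ℕ) : Prop := (Q.MomentFiber K l α).Nonempty

theorem Nn.pair_eq_zero {l : Q.I → K} {α : Q.I → ℕ} (h : Nn l α) :
    Q.pair K l (Q.toZ α) = 0 := by
  obtain ⟨x, hx⟩ := h
  have h1 := moment_trace α x (fun i => 1)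
  simp only [Matrix.mul_one] at h1
  have h2 : ∀ i, Q.moment K α x i = l i • 1 := hx
  simp only [h2, Matrix.trace_smul, Matrix.trace_one, Fintype.card_fin, smul_eq_mul] at h1
  rw [pair]
  simp only [toZ, Int.cast_natCast]
  rw [h1]
  refine Finset.sum_eq_zero fun a _ => ?_
  rw [Matrix.trace_mul_comm, sub_self]

/-- A subspace of `K^n` together with adapted maps for the subspace and the quotient. -/
theorem exists_adapted (n : ℕ) (U : Submodule K (Fin n → K)) :
    ∃ (d d' : ℕ) (ι : Matrix (Fin n) (Fin d) K) (ρ : Matrix (Fin d) (Fin n) K)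
      (ι' : Matrix (Fin n) (Fin d') K) (ρ' : Matrix (Fin d') (Fin n) K),
      n = d + d' ∧ d = Module.finrank K U ∧ ρ * ι = 1 ∧ ρ' * ι' = 1 ∧
      ι * ρ + ι' * ρ' = 1 ∧ (∀ v, ι.mulVec v ∈ U) ∧ (∀ v ∈ U, ρ'.mulVec v = 0) := by
  obtain ⟨W, hW⟩ := U.exists_isCompl
  have hd := Submodule.finrank_add_eq_of_isCompl hW
  rw [Module.finrank_fin_fun] at hd
  let b := Module.finBasis K U
  let b' := Module.finBasis K W
  let e := U.prodEquivOfIsCompl W hW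
  let I1 : (Fin (Module.finrank K U) → K) →ₗ[K] (Fin n → K) :=
    U.subtype ∘ₗ b.equivFun.symm.toLinearMap
  let R1 : (Fin n → K) →ₗ[K] (Fin (Module.finrank K U) → K) :=
    b.equivFun.toLinearMap ∘ₗ LinearMap.fst K U W ∘ₗ e.symm.toLinearMap
  let I2 : (Fin (Module.finrank K W) → K) →ₗ[K] (Fin n → K) :=
    W.subtype ∘ₗ b'.equivFun.symm.toLinearMap
  let R2 : (Fin n → K) →ₗ[K] (Fin (Module.finrank K W) → K) :=
    b'.equivFun.toLinearMap ∘ₗ LinearMap.snd K U W ∘ₗ e.symm.toLinearMap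
  have eU : ∀ u : U, e.symm (u : Fin n → K) = (u, 0) := fun u =>
    Submodule.prodEquivOfIsCompl_symm_apply_left U W hW u
  have eW : ∀ u : W, e.symm (u : Fin n → K) = (0, u) := fun u =>
    Submodule.prodEquivOfIsCompl_symm_apply_right U W hW u
  refine ⟨_, _, LinearMap.toMatrix' I1, LinearMap.toMatrix' R1, LinearMap.toMatrix' I2,
    LinearMap.toMatrix' R2, hd.symm, rfl, ?_, ?_, ?_, ?_, ?_⟩
  · rw [← LinearMap.toMatrix'_comp, ← LinearMap.toMatrix'_id]
    congr 1
    refine LinearMap.ext fun v => ?_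
    simp only [R1, I1, LinearMap.comp_apply, LinearEquiv.coe_coe, Submodule.subtype_apply,
      eU, LinearMap.fst_apply, LinearEquiv.apply_symm_apply, LinearMap.id_apply]
  · rw [← LinearMap.toMatrix'_comp, ← LinearMap.toMatrix'_id]
    congr 1
    refine LinearMap.ext fun v => ?_
    simp only [R2, I2, LinearMap.comp_apply, LinearEquiv.coe_coe, Submodule.subtype_apply,
      eW, LinearMap.snd_apply, LinearEquiv.apply_symm_apply, LinearMap.id_apply]
  · rw [← LinearMap.toMatrix'_comp, ← LinearMap.toMatrix'_comp, ← LinearMap.toMatrix'_id,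
      ← map_add]
    congr 1
    refine LinearMap.ext fun v => ?_
    simp only [R2, I2, R1, I1, LinearMap.add_apply, LinearMap.comp_apply, LinearEquiv.coe_coe,
      Submodule.subtype_apply, LinearMap.fst_apply,
      LinearMap.snd_apply, LinearEquiv.symm_apply_apply, LinearMap.id_apply]
    conv_rhs => rw [← e.apply_symm_apply v]
    rfl
  · intro v
    rw [LinearMap.toMatrix'_mulVec]
    exact (b.equivFun.symm v).2
  · intro v hv
    rw [LinearMap.toMatrix'_mulVec]
    simp only [R2, LinearMap.comp_apply, LinearEquiv.coe_coe]
    rw [eU ⟨v, hv⟩]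
    simp

theorem mat_zero_of_mulVec {m n : ℕ} (A : Matrix (Fin m) (Fin n) K)
    (h : ∀ v, A.mulVec v = 0) : A = 0 := by
  apply Matrix.toLin'.injective
  refine LinearMap.ext fun v => ?_
  simpa using h v

/-- Dimension vectors of submodules and quotients. -/
theorem Nn.split {l : Q.I → K} {α : Q.I → ℕ} {x : Q.Rep K α} (hx : x ∈ Q.MomentFiber K l α)
    {U : ∀ i : Q.I, Submodule K (Fin (α i) → K)} (hU : Q.SubRep K α x U) :
    ∃ δ δ' : Q.I → ℕ, α = δ + δ' ∧ (∀ i, δ i = Module.finrank K (U i)) ∧ Nn l δ ∧ Nn l δ' := by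
  choose d d' ι ρ ι' ρ' h1 h2 h3 h4 h5 h6 h7 using fun i => exists_adapted (α i) (U i)
  have hx' : ∀ i, Q.moment K α x i = l i • 1 := hx
  have z2 : ∀ c : Q.DA, ρ' (Q.dh c) * x c * ι (Q.dt c) = 0 := by
    intro c
    refine mat_zero_of_mulVec _ fun v => ?_
    rw [← Matrix.mulVec_mulVec, ← Matrix.mulVec_mulVec]
    exact h7 _ _ (hU c _ (h6 _ v))
  refine ⟨d, d', funext h1, h2, ?_, ?_⟩
  · refine ⟨fun c => ρ (Q.dh c) * x c * ι (Q.dt c), fun i => ?_⟩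
    have key := moment_intertwine d α (fun c => ρ (Q.dh c) * x c * ι (Q.dt c)) x ι (by
      intro c
      have := congrArg (· * (x c * ι (Q.dt c))) (h5 (Q.dh c))
      simp only [Matrix.add_mul, Matrix.one_mul, Matrix.mul_assoc] at this
      have z2' := z2 c
      simp only [Matrix.mul_assoc] at z2'
      rw [z2', Matrix.mul_zero, add_zero] at this
      simpa only [Matrix.mul_assoc] using this) i
    have := congrArg (ρ i * ·) key
    simp only [← Matrix.mul_assoc, h3, Matrix.one_mul] at this
    rw [this, hx']
    simp [h3]
  · refine ⟨fun c => ρ' (Q.dh c) * x c * ι' (Q.dt c), fun i => ?_⟩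
    have key := moment_intertwine α d' x (fun c => ρ' (Q.dh c) * x c * ι' (Q.dt c)) ρ' (by
      intro c
      have := congrArg ((ρ' (Q.dh c) * x c) * ·) (h5 (Q.dt c))
      simp only [Matrix.mul_add, Matrix.mul_one] at this
      rw [← Matrix.mul_assoc, z2 c, Matrix.zero_mul, zero_add] at this
      conv_lhs => rw [← this]
      simp only [Matrix.mul_assoc]) i
    have := congrArg (· * ι' i) key
    rw [Matrix.mul_assoc _ (ρ' i), h4, Matrix.mul_one] at this
    rw [← this, hx']
    simp [h4]

end MomentBasics

end FinQuiver

namespace FinQuiver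

section Homs
variable {Q : FinQuiver} {K : Type} [Field K]

/-- Homomorphisms of representations of the double quiver. -/
def IsHom {α γ : Q.I → ℕ} (x : Q.Rep K α) (y : Q.Rep K γ)
    (f : ∀ i, Matrix (Fin (γ i)) (Fin (α i)) K) : Prop :=
  ∀ c : Q.DA, f (Q.dh c) * x c = y c * f (Q.dt c)

/-- The space of families of matrices, degree zero part. -/
abbrev C0 (K : Type) {Q : FinQuiver} (α γ : Q.I → ℕ) : Type :=
  ∀ i : Q.I, Matrix (Fin (γ i)) (Fin (α i)) K

/-- The space of families of matrices, degree one part. -/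
abbrev C1 (K : Type) {Q : FinQuiver} (α γ : Q.I → ℕ) : Type :=
  ∀ c : Q.DA, Matrix (Fin (γ (Q.dh c))) (Fin (α (Q.dt c))) K

/-- The differential. -/
def d0 {α γ : Q.I → ℕ} (x : Q.Rep K α) (y : Q.Rep K γ) : C0 K α γ →ₗ[K] C1 K α γ where
  toFun f := fun c => y c * f (Q.dt c) - f (Q.dh c) * x c
  map_add' f g := by
    funext c
    simp only [Pi.add_apply, Matrix.mul_add, Matrix.add_mul]
    abel
  map_smul' r f := by
    funext c
    simp only [Pi.smul_apply, Matrix.mul_smul, Matrix.smul_mul, RingHom.id_apply, smul_sub]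

theorem d0_apply {α γ : Q.I → ℕ} (x : Q.Rep K α) (y : Q.Rep K γ) (f : C0 K α γ) (c : Q.DA) :
    d0 x y f c = y c * f (Q.dt c) - f (Q.dh c) * x c := rfl

/-- The pairing between the two degree one parts. -/
def prg (K : Type) [Field K] {Q : FinQuiver} (α γ : Q.I → ℕ) :
    C1 K α γ →ₗ[K] Module.Dual K (C1 K γ α) :=
  LinearMap.mk₂ K (fun φ ψ => ∑ a : Q.A, ((φ (Sum.inl a) * ψ (Sum.inr a)).trace
      - (φ (Sum.inr a) * ψ (Sum.inl a)).trace))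
    (by
      intro φ φ' ψ
      rw [← Finset.sum_add_distrib]
      refine Finset.sum_congr rfl fun a _ => ?_
      simp only [Pi.add_apply, Matrix.add_mul, Matrix.trace_add]
      ring)
    (by
      intro r φ ψ
      rw [smul_eq_mul, Finset.mul_sum]
      refine Finset.sum_congr rfl fun a _ => ?_
      simp only [Pi.smul_apply, Matrix.smul_mul, Matrix.trace_smul, smul_eq_mul]
      ring)
    (by
      intro φ ψ ψ'
      rw [← Finset.sum_add_distrib]
      refine Finset.sum_congr rfl fun a _ => ?_
      simp only [Pi.add_apply, Matrix.mul_add, Matrix.trace_add]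
      ring)
    (by
      intro r φ ψ
      rw [smul_eq_mul, Finset.mul_sum]
      refine Finset.sum_congr rfl fun a _ => ?_
      simp only [Pi.smul_apply, Matrix.mul_smul, Matrix.trace_smul, smul_eq_mul]
      ring)

theorem prg_apply {α γ : Q.I → ℕ} (φ : C1 K α γ) (ψ : C1 K γ α) :
    prg K α γ φ ψ = ∑ a : Q.A, ((φ (Sum.inl a) * ψ (Sum.inr a)).trace
      - (φ (Sum.inr a) * ψ (Sum.inl a)).trace) := rfl

theorem prg_injective (α γ : Q.I → ℕ) : Function.Injective (prg K α γ) := by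
  rw [injective_iff_map_eq_zero]
  intro φ h
  have h' : ∀ ψ, prg K α γ φ ψ = 0 := fun ψ => by rw [h]; rfl
  classical
  have hs : ∀ (c : Q.DA) (X : Matrix (Fin (α (Q.dh c))) (Fin (γ (Q.dt c))) K) (d : Q.DA),
      d ≠ c → (Pi.single c X : C1 K γ α) d = 0 := by
    intro c X d hd
    exact Pi.single_eq_of_ne (M := fun c : Q.DA => Matrix (Fin (α (Q.dh c))) (Fin (γ (Q.dt c))) K) hd X
  funext c
  rcases c with a | a
  · refine Matrix.ext_iff_trace_mul_right.mpr fun X => ?_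
    have := h' (Pi.single (Sum.inr a) X)
    rw [prg_apply, Finset.sum_eq_single a] at this
    · rw [hs (Sum.inr a) X (Sum.inl a) (by simp), Pi.single_eq_same] at this
      simpa using this
    · intro b _ hb
      rw [hs (Sum.inr a) X (Sum.inl b) (by simp), hs (Sum.inr a) X (Sum.inr b) (by simpa using hb)]
      simp
    · simp
  · refine Matrix.ext_iff_trace_mul_right.mpr fun X => ?_
    have := h' (Pi.single (Sum.inl a) X)
    rw [prg_apply, Finset.sum_eq_single a] at this
    · rw [hs (Sum.inl a) X (Sum.inr a) (by simp), Pi.single_eq_same] at this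
      simpa using this
    · intro b _ hb
      rw [hs (Sum.inl a) X (Sum.inr b) (by simp), hs (Sum.inl a) X (Sum.inl b) (by simpa using hb)]
      simp
    · simp

theorem trace_identity {n1 n2 m1 m2 : ℕ} (p : Matrix (Fin n1) (Fin n2) K)
    (p' : Matrix (Fin n2) (Fin n1) K) (q : Matrix (Fin m1) (Fin m2) K)
    (q' : Matrix (Fin m2) (Fin m1) K) (fh : Matrix (Fin m1) (Fin n1) K)
    (ft : Matrix (Fin m2) (Fin n2) K) (gh : Matrix (Fin n1) (Fin m1) K)
    (gt : Matrix (Fin n2) (Fin m2) K) :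
    ((q * ft - fh * p) * (p' * gh - gt * q')).trace
      - ((q' * fh - ft * p') * (p * gt - gh * q)).trace =
    ((q * q' * (fh * gh)).trace - (q' * q * (ft * gt)).trace) -
    ((p * p' * (gh * fh)).trace - (p' * p * (gt * ft)).trace) := by
  have c1 := Matrix.trace_mul_comm q (ft * p' * gh)
  have c2 := Matrix.trace_mul_comm (fh * p * gt) q'
  have c3 := Matrix.trace_mul_comm (q * ft * gt) q'
  have c4 := Matrix.trace_mul_comm (q' * fh * gh) q
  have c5 := Matrix.trace_mul_comm fh (p * p' * gh)
  have c6 := Matrix.trace_mul_comm ft (p' * p * gt)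
  simp only [Matrix.sub_mul, Matrix.mul_sub, Matrix.trace_sub, Matrix.mul_assoc] at *
  linear_combination c1 + c2 - c3 + c4 - c5 + c6

theorem prg_d0_d0 {α γ : Q.I → ℕ} {l : Q.I → K} {x : Q.Rep K α} {y : Q.Rep K γ}
    (hx : x ∈ Q.MomentFiber K l α) (hy : y ∈ Q.MomentFiber K l γ)
    (f : C0 K α γ) (g : C0 K γ α) : prg K α γ (d0 x y f) (d0 y x g) = 0 := by
  have e1 := moment_trace α x (fun i => g i * f i)
  have e2 := moment_trace γ y (fun i => f i * g i)
  have hx' : ∀ i, Q.moment K α x i = l i • 1 := hx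
  have hy' : ∀ i, Q.moment K γ y i = l i • 1 := hy
  simp only [hx'] at e1
  simp only [hy'] at e2
  have e3 : ∑ i, ((l i • (1 : Matrix (Fin (α i)) (Fin (α i)) K)) * (g i * f i)).trace =
      ∑ i, ((l i • (1 : Matrix (Fin (γ i)) (Fin (γ i)) K)) * (f i * g i)).trace := by
    refine Finset.sum_congr rfl fun i _ => ?_
    simp only [Matrix.smul_mul, Matrix.one_mul, Matrix.trace_smul]
    rw [Matrix.trace_mul_comm]
  rw [e1, e2] at e3
  rw [prg_apply, ← sub_eq_zero.mpr e3.symm, ← Finset.sum_sub_distrib]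
  refine Finset.sum_congr rfl fun a _ => ?_
  have a1 : d0 x y f (Sum.inl a) = y (Sum.inl a) * f (Q.t a) - f (Q.h a) * x (Sum.inl a) := rfl
  have a2 : d0 x y f (Sum.inr a) = y (Sum.inr a) * f (Q.h a) - f (Q.t a) * x (Sum.inr a) := rfl
  have a3 : d0 y x g (Sum.inl a) = x (Sum.inl a) * g (Q.t a) - g (Q.h a) * y (Sum.inl a) := rfl
  have a4 : d0 y x g (Sum.inr a) = x (Sum.inr a) * g (Q.h a) - g (Q.t a) * y (Sum.inr a) := rfl
  rw [a1, a2, a3, a4]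
  exact trace_identity _ _ _ _ _ _ _ _

theorem exists_hom {α γ : Q.I → ℕ} {l : Q.I → K} {x : Q.Rep K α} {y : Q.Rep K γ}
    (hx : x ∈ Q.MomentFiber K l α) (hy : y ∈ Q.MomentFiber K l γ)
    (hpos : 0 < Q.bil (Q.toZ α) (Q.toZ γ)) :
    (∃ f, IsHom x y f ∧ f ≠ 0) ∨ (∃ f, IsHom y x f ∧ f ≠ 0) := by
  by_contra hcon
  push Not at hcon
  obtain ⟨h1, h2⟩ := hcon
  have i1 : Function.Injective (d0 x y) := by
    rw [injective_iff_map_eq_zero]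
    intro f hf
    refine h1 f fun c => ?_
    have := congrFun hf c
    rw [d0_apply] at this
    exact (sub_eq_zero.mp this).symm
  have i2 : Function.Injective (d0 y x) := by
    rw [injective_iff_map_eq_zero]
    intro f hf
    refine h2 f fun c => ?_
    have := congrFun hf c
    rw [d0_apply] at this
    exact (sub_eq_zero.mp this).symm
  have hle : ((LinearMap.range (d0 x y)).map (prg K α γ)) ≤
      (LinearMap.range (d0 y x)).dualAnnihilator := by
    rintro _ ⟨_, ⟨f, rfl⟩, rfl⟩
    rw [Submodule.mem_dualAnnihilator]
    rintro _ ⟨g, rfl⟩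
    exact prg_d0_d0 hx hy f g
  have hfr := Submodule.finrank_mono hle
  have r1 : Module.finrank K ((LinearMap.range (d0 x y)).map (prg K α γ)) =
      Module.finrank K (C0 K α γ) := by
    rw [← LinearMap.range_comp, LinearMap.finrank_range_of_inj]
    rw [LinearMap.coe_comp]
    exact (prg_injective α γ).comp i1
  have r2 := Subspace.finrank_add_finrank_dualAnnihilator_eq (LinearMap.range (d0 y x))
  rw [LinearMap.finrank_range_of_inj i2] at r2
  rw [r1] at hfr
  have f0 : Module.finrank K (C0 K α γ) = ∑ i, γ i * α i := by
    simp [C0, Module.finrank_pi_fintype, Module.finrank_matrix]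
  have f0' : Module.finrank K (C0 K γ α) = ∑ i, α i * γ i := by
    simp [C0, Module.finrank_pi_fintype, Module.finrank_matrix]
  have f1 : Module.finrank K (C1 K γ α) = ∑ c : Q.DA, α (Q.dh c) * γ (Q.dt c) := by
    simp [C1, Module.finrank_pi_fintype, Module.finrank_matrix]
  have hb : Q.bil (Q.toZ α) (Q.toZ γ) = 2 * ((∑ i, α i * γ i : ℕ) : ℤ) -
      ((∑ c : Q.DA, α (Q.dh c) * γ (Q.dt c) : ℕ) : ℤ) := by
    rw [bil]
    push_cast
    rw [Finset.mul_sum]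
    simp only [toZ, mul_assoc]
  rw [f0] at hfr
  rw [f0', f1] at r2
  have : ∑ i, γ i * α i = ∑ i, α i * γ i := Finset.sum_congr rfl fun i _ => mul_comm _ _
  omega

/-- Irreducible dimension vectors. -/
def Irr (l : Q.I → K) (α : Q.I → ℕ) : Prop :=
  Nn l α ∧ α ≠ 0 ∧ ∀ δ δ' : Q.I → ℕ, α = δ + δ' → Nn l δ → Nn l δ' → δ = 0 ∨ δ' = 0

theorem hom_bijective {α γ : Q.I → ℕ} {l : Q.I → K} {x : Q.Rep K α} {y : Q.Rep K γ}
    (hx : x ∈ Q.MomentFiber K l α) (hy : y ∈ Q.MomentFiber K l γ)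
    (hα : Irr l α) (hγ : Irr l γ) {f : C0 K α γ} (hf : IsHom x y f) (hne : f ≠ 0) :
    α = γ ∧ ∀ i, Function.Bijective (f i).mulVec := by
  have inj : ∀ i, Function.Injective (f i).mulVec := by
    have hU : Q.SubRep K α x (fun i => LinearMap.ker (Matrix.toLin' (f i))) := by
      intro c v hv
      simp only [LinearMap.mem_ker, Matrix.toLin'_apply] at hv ⊢
      rw [Matrix.mulVec_mulVec, hf c, ← Matrix.mulVec_mulVec, hv, Matrix.mulVec_zero]
    obtain ⟨δ, δ', h1, h2, h3, h4⟩ := Nn.split hx hU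
    rcases hα.2.2 δ δ' h1 h3 h4 with h | h
    · intro i
      have h5 := h2 i
      rw [h, Pi.zero_apply, eq_comm, Submodule.finrank_eq_zero] at h5
      exact LinearMap.ker_eq_bot.mp h5
    · exfalso
      apply hne
      funext i
      have h5 := h2 i
      rw [h, add_zero] at h1
      rw [← h1] at h5
      have h6 : LinearMap.ker (Matrix.toLin' (f i)) = ⊤ := by
        apply Submodule.eq_top_of_finrank_eq
        rw [← h5, Module.finrank_fin_fun]
      rw [LinearMap.ker_eq_top] at h6
      simpa using h6
  have surj : ∀ i, Function.Surjective (f i).mulVec := by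
    have hU : Q.SubRep K γ y (fun i => LinearMap.range (Matrix.toLin' (f i))) := by
      rintro c _ ⟨v, rfl⟩
      refine ⟨(x c).mulVec v, ?_⟩
      simp only [Matrix.toLin'_apply]
      rw [Matrix.mulVec_mulVec, hf c, ← Matrix.mulVec_mulVec]
    obtain ⟨δ, δ', h1, h2, h3, h4⟩ := Nn.split hy hU
    rcases hγ.2.2 δ δ' h1 h3 h4 with h | h
    · exfalso
      apply hne
      funext i
      have h5 := h2 i
      rw [h, Pi.zero_apply, eq_comm, Submodule.finrank_eq_zero, LinearMap.range_eq_bot] at h5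
      simpa using h5
    · intro i
      have h5 := h2 i
      rw [h, add_zero] at h1
      rw [← h1] at h5
      have h6 : LinearMap.range (Matrix.toLin' (f i)) = ⊤ := by
        apply Submodule.eq_top_of_finrank_eq
        rw [← h5, Module.finrank_fin_fun]
      exact LinearMap.range_eq_top.mp h6
  refine ⟨?_, fun i => ⟨inj i, surj i⟩⟩
  funext i
  have := (LinearEquiv.ofBijective (Matrix.toLin' (f i))
    ⟨inj i, surj i⟩).finrank_eq
  simpa using this

end Homs

end FinQuiver

namespace FinQuiver

section Lifting

open Polynomial in
theorem det_aeval_eq {K : Type} [Field K] [IsAlgClosed K] {n : ℕ} (M : Matrix (Fin n) (Fin n) K)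
    (h : K[X]) : (aeval M h).det = (M.charpoly.roots.map fun c => h.eval c).prod := by
  have hcard : M.charpoly.roots.card = n := by
    rw [← (IsAlgClosed.splits M.charpoly).natDegree_eq_card_roots, M.charpoly_natDegree_eq_dim,
      Fintype.card_fin]
  have lin : ∀ r : K, (aeval M (X - C r)).det =
      (M.charpoly.roots.map fun c => (X - C r).eval c).prod := by
    intro r
    have e1 : aeval M (X - C r) = -(Matrix.scalar (Fin n) r - M) := by
      simp [Matrix.algebraMap_eq_diagonal, Matrix.scalar_apply, Pi.algebraMap_def]
    have e2 : M.charpoly.eval r = (M.charpoly.roots.map fun c => r - c).prod := by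
      conv_lhs => rw [(IsAlgClosed.splits M.charpoly).eq_prod_roots_of_monic M.charpoly_monic]
      rw [eval_multiset_prod, Multiset.map_map]
      simp
    rw [e1, Matrix.det_neg, ← Matrix.eval_charpoly, e2, Fintype.card_fin]
    have e3 := Multiset.prod_map_neg (M.charpoly.roots.map fun c => r - c)
    rw [Multiset.card_map, hcard, Multiset.map_map] at e3
    rw [← e3]
    simp
  have mulc : ∀ g g' : K[X],
      (aeval M g).det = (M.charpoly.roots.map fun c => g.eval c).prod →
      (aeval M g').det = (M.charpoly.roots.map fun c => g'.eval c).prod →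
      (aeval M (g * g')).det = (M.charpoly.roots.map fun c => (g * g').eval c).prod := by
    intro g g' h1 h2
    rw [map_mul, Matrix.det_mul, h1, h2, ← Multiset.prod_map_mul]
    simp
  have hC : ∀ a : K, (aeval M (C a)).det = (M.charpoly.roots.map fun c => (C a).eval c).prod := by
    intro a
    rw [aeval_C, Algebra.algebraMap_eq_smul_one, Matrix.det_smul]
    simp [hcard]
  have hP : ∀ s : Multiset K, (aeval M (s.map fun r => X - C r).prod).det =
      (M.charpoly.roots.map fun c => ((s.map fun r => X - C r).prod).eval c).prod := by
    intro s
    induction s using Multiset.induction_on with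
    | empty => simp
    | cons r s ih =>
      rw [Multiset.map_cons, Multiset.prod_cons]
      exact mulc _ _ (lin r) ih
  rw [(IsAlgClosed.splits h).eq_prod_roots]
  exact mulc _ _ (hC _) (hP _)

open Polynomial in
theorem trace_aeval_eq {K : Type} [Field K] [IsAlgClosed K] {n : ℕ} (M : Matrix (Fin n) (Fin n) K)
    (f : K[X]) : (aeval M f).trace = (M.charpoly.roots.map fun c => f.eval c).sum := by
  have h1 : (aeval M f).charpoly = (M.charpoly.roots.map fun c => X - C (f.eval c)).prod := by
    apply Polynomial.funext
    intro r
    rw [Matrix.eval_charpoly]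
    have := det_aeval_eq M (C r - f)
    rw [map_sub, aeval_C] at this
    rw [eval_multiset_prod, Multiset.map_map]
    simpa [Matrix.algebraMap_eq_diagonal, Matrix.scalar_apply, Pi.algebraMap_def] using this
  rw [Matrix.trace_eq_sum_roots_charpoly, h1]
  have h2 : (M.charpoly.roots.map fun c => X - C (f.eval c)) =
    (M.charpoly.roots.map fun c => f.eval c).map fun a => X - C a := by
    rw [Multiset.map_map]; rfl
  rw [h2, roots_multiset_prod_X_sub_C]

/-- There are arbitrarily large finite families independent over the rationals. -/
theorem exists_linInd (K : Type) [Field K] [CharZero K] [IsAlgClosed K] (n : ℕ) :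
    ∃ v : Fin n → K, LinearIndependent ℚ v := by
  obtain ⟨p, hp, hpp⟩ := Nat.exists_infinite_primes (n + 2)
  have hdeg : (Polynomial.cyclotomic p K).degree ≠ 0 := by
    rw [Polynomial.degree_cyclotomic, Nat.totient_prime hpp]
    exact_mod_cast (by omega : p - 1 ≠ 0)
  obtain ⟨ζ, hζ⟩ := IsAlgClosed.exists_root _ hdeg
  have : NeZero (p : K) := ⟨by exact_mod_cast hpp.ne_zero⟩
  rw [Polynomial.isRoot_cyclotomic_iff] at hζ
  have hmin := Polynomial.cyclotomic_eq_minpoly_rat hζ hpp.pos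
  have hnd : n ≤ (minpoly ℚ ζ).natDegree := by
    rw [← hmin, Polynomial.natDegree_cyclotomic, Nat.totient_prime hpp]
    omega
  exact ⟨_, (linearIndependent_pow (K := ℚ) ζ).comp (Fin.castLE hnd) (Fin.castLE_injective hnd)⟩

/-- Generic parameters. -/
theorem exists_generic (Q : FinQuiver) (K : Type) [Field K] [CharZero K] [IsAlgClosed K]
    (γ : Q.I → ℤ) (hγ : γ ≠ 0) :
    ∃ l : Q.I → K, Q.pair K l γ = 0 ∧
      ∀ δ : Q.I → ℤ, Q.pair K l δ = 0 → ∀ i j, δ i * γ j = δ j * γ i := by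
  obtain ⟨j0, hj0⟩ := Function.ne_iff.mp hγ
  rw [Pi.zero_apply] at hj0
  obtain ⟨v, hv⟩ := exists_linInd K (Fintype.card Q.I)
  have hw := hv.comp _ (Fintype.equivFin Q.I).injective
  set w : Q.I → K := v ∘ (Fintype.equivFin Q.I) with hwdef
  have key : ∀ δ : Q.I → ℤ, Q.pair K (fun i => (γ j0 : K) * w i -
      if i = j0 then ∑ k, w k * (γ k : K) else 0) δ =
      ∑ i, ((γ j0 * δ i - δ j0 * γ i : ℤ) : K) * w i := by
    intro δ
    simp only [pair, sub_mul, Finset.sum_sub_distrib, ite_mul, zero_mul, Finset.sum_ite_eq',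
      Finset.mem_univ, if_true, Int.cast_sub, Int.cast_mul]
    congr 1
    · exact Finset.sum_congr rfl fun i _ => by ring
    · rw [Finset.sum_mul]
      exact Finset.sum_congr rfl fun i _ => by ring
  refine ⟨fun i => (γ j0 : K) * w i - if i = j0 then ∑ k, w k * (γ k : K) else 0, ?_, ?_⟩
  · rw [key]
    exact Finset.sum_eq_zero fun i _ => by simp
  · intro δ hδ
    rw [key] at hδ
    have hz := Fintype.linearIndependent_iff.mp hw
      (fun i => ((γ j0 * δ i - δ j0 * γ i : ℤ) : ℚ)) (by
        rw [← hδ]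
        refine Finset.sum_congr rfl fun i _ => ?_
        rw [Algebra.smul_def]
        simp)
    have hzz : ∀ i, γ j0 * δ i - δ j0 * γ i = 0 := fun i => by exact_mod_cast hz i
    intro i j
    apply mul_left_cancel₀ hj0
    linear_combination γ j * hzz i - γ i * hzz j

/-- The dual of a product of matrix spaces is given by traces. -/
theorem exists_trace_dual {Q : FinQuiver} {K : Type} [Field K] (α : Q.I → ℕ)
    (φ : Module.Dual K (C0 K α α)) : ∃ θ : C0 K α α, ∀ M, φ M = ∑ i, (M i * θ i).trace := by
  let B : C0 K α α →ₗ[K] Module.Dual K (C0 K α α) :=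
    LinearMap.mk₂ K (fun θ M => ∑ i, (M i * θ i).trace)
      (by
        intro θ θ' M
        rw [← Finset.sum_add_distrib]
        exact Finset.sum_congr rfl fun i _ => by simp [Matrix.mul_add])
      (by
        intro r θ M
        rw [Finset.smul_sum]
        exact Finset.sum_congr rfl fun i _ => by simp)
      (by
        intro θ M M'
        rw [← Finset.sum_add_distrib]
        exact Finset.sum_congr rfl fun i _ => by simp [Matrix.add_mul])
      (by
        intro r θ M
        rw [Finset.smul_sum]
        exact Finset.sum_congr rfl fun i _ => by simp)
  have hB : ∀ θ M, B θ M = ∑ i, (M i * θ i).trace := fun _ _ => rfl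
  have hinj : Function.Injective B := by
    rw [injective_iff_map_eq_zero]
    intro θ h
    funext i
    refine Matrix.ext_iff_trace_mul_left.mpr fun X => ?_
    have h1 : B θ (Pi.single i X) = 0 := by rw [h]; rfl
    rw [hB, Finset.sum_eq_single i] at h1
    · rw [Pi.single_eq_same] at h1
      simpa using h1
    · intro j _ hj
      have : (Pi.single i X : C0 K α α) j = 0 :=
        Pi.single_eq_of_ne (M := fun i : Q.I => Matrix (Fin (α i)) (Fin (α i)) K) hj X
      rw [this]; simp
    · simp
  have hsurj : Function.Surjective B :=
    (LinearMap.injective_iff_surjective_of_finrank_eq_finrank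
      (Subspace.dual_finrank_eq).symm).mp hinj
  obtain ⟨θ, hθ⟩ := hsurj φ
  exact ⟨θ, fun M => by rw [← hθ, hB]⟩

/-- The lifting theorem: from a generic parameter to all parameters. -/
theorem lift_all {Q : FinQuiver} {K : Type} [Field K] [CharZero K] [IsAlgClosed K]
    {α : Q.I → ℕ} {l' : Q.I → K}
    (hgen : ∀ δ : Q.I → ℤ, Q.pair K l' δ = 0 → ∀ i j, δ i * Q.toZ α j = δ j * Q.toZ α i)
    (hN : Nn l' α) (l : Q.I → K) (hl : Q.pair K l (Q.toZ α) = 0) : Nn l α := by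
  obtain ⟨x, hx⟩ := hN
  have hx' : ∀ i, Q.moment K α x i = l' i • 1 := hx
  -- the representation with new reverse arrows
  let y (F : ∀ a : Q.A, Matrix (Fin (α (Q.t a))) (Fin (α (Q.h a))) K) : Q.Rep K α :=
    fun c => match c with
      | Sum.inl a => x (Sum.inl a)
      | Sum.inr a => F a
  let Φ : (∀ a : Q.A, Matrix (Fin (α (Q.t a))) (Fin (α (Q.h a))) K) →ₗ[K] C0 K α α :=
    { toFun := fun F i => Q.moment K α (y F) i
      map_add' := by
        intro F F'
        funext i
        simp only [moment, y, Pi.add_apply]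
        rw [sub_add_sub_comm, ← Finset.sum_add_distrib, ← Finset.sum_add_distrib]
        congr 1
        · refine Finset.sum_congr rfl fun a _ => ?_
          split_ifs with h
          · subst h; rw [Matrix.mul_add]; rfl
          · simp
        · refine Finset.sum_congr rfl fun a _ => ?_
          split_ifs with h
          · subst h; rw [Matrix.add_mul]; rfl
          · simp
      map_smul' := by
        intro r F
        funext i
        simp only [moment, y, Pi.smul_apply, RingHom.id_apply]
        rw [smul_sub, Finset.smul_sum, Finset.smul_sum]
        congr 1
        · refine Finset.sum_congr rfl fun a _ => ?_
          split_ifs with h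
          · subst h; rw [Matrix.mul_smul]; rfl
          · simp
        · refine Finset.sum_congr rfl fun a _ => ?_
          split_ifs with h
          · subst h; rw [Matrix.smul_mul]; rfl
          · simp }
  by_contra hcon
  have hnot : (fun i => l i • 1 : C0 K α α) ∉ LinearMap.range Φ := by
    rintro ⟨F, hF⟩
    exact hcon ⟨y F, fun i => congrFun hF i⟩
  obtain ⟨φ, hφ1, hφ2⟩ := Submodule.exists_le_ker_of_notMem hnot
  obtain ⟨θ, hθ⟩ := exists_trace_dual α φ
  have hcomm : ∀ a : Q.A, θ (Q.h a) * x (Sum.inl a) = x (Sum.inl a) * θ (Q.t a) := by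
    intro a
    refine Matrix.ext_iff_trace_mul_right.mpr fun X => ?_
    classical
    let F : ∀ a : Q.A, Matrix (Fin (α (Q.t a))) (Fin (α (Q.h a))) K := Pi.single a X
    have h1 : φ (Φ F) = 0 := hφ2 ⟨F, rfl⟩
    rw [hθ] at h1
    have h2 := moment_trace α (y F) θ
    have h3 : ∑ i, (Φ F i * θ i).trace = ∑ i, (Q.moment K α (y F) i * θ i).trace := rfl
    rw [← h3, h1, Finset.sum_eq_single a] at h2
    · have h4 : y F (Sum.inl a) = x (Sum.inl a) := rfl
      have h5 : y F (Sum.inr a) = X := Pi.single_eq_same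
        (M := fun a : Q.A => Matrix (Fin (α (Q.t a))) (Fin (α (Q.h a))) K) a X
      rw [h4, h5] at h2
      have h6 := (sub_eq_zero.mp h2.symm)
      rw [Matrix.trace_mul_comm, ← Matrix.mul_assoc] at h6
      rw [h6, Matrix.mul_assoc, Matrix.trace_mul_comm]
    · intro b _ hb
      have h5 : y F (Sum.inr b) = 0 := Pi.single_eq_of_ne
        (M := fun a : Q.A => Matrix (Fin (α (Q.t a))) (Fin (α (Q.h a))) K) hb X
      rw [h5]; simp
    · simp
  -- polynomials in θ
  have hpoly : ∀ (f : Polynomial K) (a : Q.A), Polynomial.aeval (θ (Q.h a)) f * x (Sum.inl a) =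
      x (Sum.inl a) * Polynomial.aeval (θ (Q.t a)) f := by
    intro f a
    induction f using Polynomial.induction_on' with
    | add p q hp hq => simp only [map_add, Matrix.add_mul, Matrix.mul_add, hp, hq]
    | monomial n r =>
      have hpow : ∀ n : ℕ, θ (Q.h a) ^ n * x (Sum.inl a) = x (Sum.inl a) * θ (Q.t a) ^ n := by
        intro n
        induction n with
        | zero => simp
        | succ n ih => rw [pow_succ, Matrix.mul_assoc, hcomm, ← Matrix.mul_assoc, ih,
            Matrix.mul_assoc, ← pow_succ]
      rw [Polynomial.aeval_monomial, Polynomial.aeval_monomial,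
        Algebra.algebraMap_eq_smul_one, Algebra.algebraMap_eq_smul_one, smul_one_mul, smul_one_mul,
        Matrix.smul_mul, Matrix.mul_smul, hpow]
  have htr : ∀ f : Polynomial K, ∑ i, l' i * (Polynomial.aeval (θ i) f).trace = 0 := by
    intro f
    have h1 := moment_trace α x (fun i => Polynomial.aeval (θ i) f)
    simp only [hx', Matrix.smul_mul, Matrix.one_mul, Matrix.trace_smul, smul_eq_mul] at h1
    rw [h1]
    refine Finset.sum_eq_zero fun a _ => ?_
    rw [Matrix.trace_mul_comm, ← Matrix.mul_assoc, hpoly, Matrix.mul_assoc (x (Sum.inl a)),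
      Matrix.trace_mul_comm, Matrix.mul_assoc, Matrix.trace_mul_comm, sub_eq_zero]
  classical
  let S : Finset K := Finset.univ.biUnion fun i => (θ i).charpoly.roots.toFinset
  have hsum : ∀ (i : Q.I) (g : K → K), ((θ i).charpoly.roots.map g).sum =
      ∑ c ∈ S, ((θ i).charpoly.roots.count c : K) * g c := by
    intro i g
    rw [Finset.sum_multiset_map_count]
    simp only [nsmul_eq_mul]
    refine Finset.sum_subset ?_ ?_
    · exact Finset.subset_biUnion_of_mem (fun i => (θ i).charpoly.roots.toFinset)
        (Finset.mem_univ i)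
    · intro c _ hc
      rw [Multiset.mem_toFinset] at hc
      rw [Multiset.count_eq_zero_of_notMem hc]; simp
  have hmult : ∀ c ∈ S, Q.pair K l' (fun i => ((θ i).charpoly.roots.count c : ℤ)) = 0 := by
    intro c hc
    rw [← htr (Lagrange.basis S id c), pair]
    refine Finset.sum_congr rfl fun i _ => ?_
    rw [trace_aeval_eq, hsum, Finset.sum_eq_single c]
    · have := Lagrange.eval_basis_self (s := S) (v := id) (Set.injOn_id _) hc
      simp only [id] at this
      rw [this]; simp
    · intro d hd hdc
      have := Lagrange.eval_basis_of_ne (s := S) (v := id) (Ne.symm hdc) hd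
      simp only [id] at this
      rw [this]; simp
    · exact fun h => absurd hc h
  apply hφ1
  rw [hθ]
  have hlt : ∑ i, ((l i • (1 : Matrix (Fin (α i)) (Fin (α i)) K)) * θ i).trace =
      ∑ c ∈ S, c * Q.pair K l (fun i => ((θ i).charpoly.roots.count c : ℤ)) := by
    simp only [pair, Finset.mul_sum]
    rw [Finset.sum_comm]
    refine Finset.sum_congr rfl fun i _ => ?_
    rw [Matrix.smul_mul, Matrix.one_mul, Matrix.trace_smul, smul_eq_mul,
      Matrix.trace_eq_sum_roots_charpoly]
    have := hsum i id
    rw [Multiset.map_id] at this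
    rw [this, Finset.mul_sum]
    refine Finset.sum_congr rfl fun c _ => ?_
    simp only [id, Int.cast_natCast]
    ring
  rw [hlt]
  refine Finset.sum_eq_zero fun c hc => ?_
  have hprop := hgen _ (hmult c hc)
  suffices Q.pair K l (fun i => ((θ i).charpoly.roots.count c : ℤ)) = 0 by rw [this, mul_zero]
  by_cases hα : ∃ j, α j ≠ 0
  · obtain ⟨j, hj⟩ := hα
    have hjK : (α j : K) ≠ 0 := by exact_mod_cast hj
    apply mul_right_cancel₀ hjK
    rw [zero_mul, pair, Finset.sum_mul]
    have : ∑ i, l i * (((θ i).charpoly.roots.count c : ℤ) : K) * (α j : K) =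
        (((θ j).charpoly.roots.count c : ℤ) : K) * Q.pair K l (Q.toZ α) := by
      rw [pair, Finset.mul_sum]
      refine Finset.sum_congr rfl fun i _ => ?_
      have h1 := congrArg (Int.cast : ℤ → K) (hprop i j)
      simp only [toZ, Int.cast_mul, Int.cast_natCast] at h1 ⊢
      linear_combination l i * h1
    rw [this, hl, mul_zero]
  · push Not at hα
    rw [pair]
    refine Finset.sum_eq_zero fun i _ => ?_
    have : (θ i).charpoly.roots.count c = 0 := by
      have h1 := Multiset.count_le_card c (θ i).charpoly.roots
      have h2 := Polynomial.card_roots' (θ i).charpoly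
      rw [Matrix.charpoly_natDegree_eq_dim, Fintype.card_fin] at h2
      have h3 := hα i
      omega
    rw [this]; simp

end Lifting

end FinQuiver

namespace FinQuiver

section Datum

/-- The sign of an arrow of the double quiver. -/
def eps (Q : FinQuiver) (K : Type) [Field K] : Q.DA → K
  | Sum.inl _ => 1
  | Sum.inr _ => -1

/-- The opposite arrow in the double quiver. -/
def st (Q : FinQuiver) : Q.DA → Q.DA
  | Sum.inl a => Sum.inr a
  | Sum.inr a => Sum.inl a

theorem st_st {Q : FinQuiver} (c : Q.DA) : Q.st (Q.st c) = c := by cases c <;> rfl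
theorem dh_st {Q : FinQuiver} (c : Q.DA) : Q.dh (Q.st c) = Q.dt c := by cases c <;> rfl
theorem dt_st {Q : FinQuiver} (c : Q.DA) : Q.dt (Q.st c) = Q.dh c := by cases c <;> rfl
theorem eps_st {Q : FinQuiver} {K : Type} [Field K] (c : Q.DA) :
    Q.eps K (Q.st c) = - Q.eps K c := by cases c <;> simp [eps, st]
theorem eps_mul_self {Q : FinQuiver} {K : Type} [Field K] (c : Q.DA) :
    Q.eps K c * Q.eps K c = 1 := by cases c <;> simp [eps]
theorem sum_st {Q : FinQuiver} {M : Type*} [AddCommMonoid M] (f : Q.DA → M) :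
    ∑ c, f (Q.st c) = ∑ c, f c :=
  Fintype.sum_bijective Q.st (Function.Involutive.bijective st_st) _ _ fun _ => rfl

/-- A representation of the deformed preprojective relations on one total space. -/
structure Datum (Q : FinQuiver) (K : Type) [Field K] (T : Type) [AddCommGroup T] [Module K T]
    (l : Q.I → K) where
  e : Q.I → T →ₗ[K] T
  E : Q.DA → T →ₗ[K] T
  idem : ∀ j u, e j (e j u) = e j u
  orth : ∀ j k u, j ≠ k → e j (e k u) = 0
  he : ∀ c u, e (Q.dh c) (E c u) = E c u
  te : ∀ c u, E c (e (Q.dt c) u) = E c u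
  rel : ∀ u, ∑ c, Q.eps K c • E c (E (Q.st c) u) = ∑ j, l j • e j u

theorem Nn.toDatum {Q : FinQuiver} {K : Type} [Field K] {l : Q.I → K} {α : Q.I → ℕ}
    (h : Nn l α) : ∃ d : Datum Q K (∀ j, Fin (α j) → K) l,
      ∀ j, LinearMap.trace K _ (d.e j) = (α j : K) := by
  obtain ⟨x, hx⟩ := h
  have hx' : ∀ i, Q.moment K α x i = l i • 1 := hx
  refine ⟨⟨fun j => LinearMap.single K (fun j => Fin (α j) → K) j ∘ₗ LinearMap.proj j,
    fun c => LinearMap.single K (fun j => Fin (α j) → K) (Q.dh c) ∘ₗ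
      (Matrix.toLin' (x c)) ∘ₗ LinearMap.proj (Q.dt c), ?_, ?_, ?_, ?_, ?_⟩, ?_⟩
  · intro j u; simp
  · intro j k u hjk
    simp [Pi.single_eq_of_ne hjk]
  · intro c u; simp
  · intro c u; simp
  · intro u
    funext i
    have h1 : (Q.moment K α x i).mulVec (u i) = l i • u i := by
      rw [hx', Matrix.smul_mulVec, Matrix.one_mulVec]
    have h2 : (∑ j, l j • (LinearMap.single K (fun j => Fin (α j) → K) j ∘ₗ
        LinearMap.proj j) u) i = l i • u i := by
      rw [Finset.sum_apply, Finset.sum_eq_single i]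
      · simp
      · intro j _ hj
        simp [Pi.single_eq_of_ne (Ne.symm hj)]
      · simp
    rw [h2, ← h1, Fintype.sum_sum_type, moment, Matrix.sub_mulVec, Matrix.sum_mulVec,
      Matrix.sum_mulVec, Pi.add_apply, Finset.sum_apply, Finset.sum_apply, sub_eq_add_neg,
      ← Finset.sum_neg_distrib]
    congr 1
    · refine Finset.sum_congr rfl fun a _ => ?_
      split_ifs with h
      · subst h
        simp [eps, st]
        exact Matrix.mulVec_mulVec (u (Q.h a)) (x (Sum.inl a)) (x (Sum.inr a))
      · simp [eps, st, Pi.single_eq_of_ne (Ne.symm h)]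
    · refine Finset.sum_congr rfl fun a _ => ?_
      split_ifs with h
      · subst h
        simp [eps, st]
        exact Matrix.mulVec_mulVec (u (Q.t a)) (x (Sum.inr a)) (x (Sum.inl a))
      · simp [eps, st, Pi.single_eq_of_ne (Ne.symm h)]
  · intro j
    rw [LinearMap.trace_comp_comm']
    have : LinearMap.proj j ∘ₗ LinearMap.single K (fun j => Fin (α j) → K) j = LinearMap.id := by
      ext; simp
    rw [this]; simp

theorem Datum.toNn {Q : FinQuiver} {K : Type} [Field K] [CharZero K] {T : Type}
    [AddCommGroup T] [Module K T] [FiniteDimensional K T] {l : Q.I → K} (d : Datum Q K T l) :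
    ∃ α : Q.I → ℕ, (∀ j, LinearMap.trace K T (d.e j) = (α j : K)) ∧ Nn l α := by
  let α : Q.I → ℕ := fun j => Module.finrank K (LinearMap.range (d.e j))
  let φ : ∀ j, LinearMap.range (d.e j) ≃ₗ[K] (Fin (α j) → K) := fun j =>
    LinearEquiv.ofFinrankEq _ _ (by simp [α])
  let ι : ∀ j, (Fin (α j) → K) →ₗ[K] T := fun j =>
    (LinearMap.range (d.e j)).subtype ∘ₗ (φ j).symm.toLinearMap
  let ρ : ∀ j, T →ₗ[K] (Fin (α j) → K) := fun j =>
    (φ j).toLinearMap ∘ₗ (d.e j).rangeRestrict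
  have hιρ : ∀ j u, ι j (ρ j u) = d.e j u := by
    intro j u; simp [ι, ρ]
  have heι : ∀ j v, d.e j (ι j v) = ι j v := by
    intro j v
    obtain ⟨u, hu⟩ := ((φ j).symm v).2
    simp only [ι, LinearMap.comp_apply, Submodule.subtype_apply, LinearEquiv.coe_coe]
    rw [← hu, d.idem]
  have hρι : ∀ j v, ρ j (ι j v) = v := by
    intro j v
    have : (d.e j).rangeRestrict (ι j v) = (φ j).symm v := Subtype.ext (heι j v)
    simp only [ρ, LinearMap.comp_apply, this, LinearEquiv.coe_coe, LinearEquiv.apply_symm_apply]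
  have hρe : ∀ j u, ρ j (d.e j u) = ρ j u := by
    intro j u; rw [← hιρ, hρι]
  have hρ0 : ∀ j k u, j ≠ k → ρ j (d.e k u) = 0 := by
    intro j k u hjk
    rw [← hρe, d.orth j k u hjk, map_zero]
  refine ⟨α, ?_, ?_⟩
  · intro j
    have h1 : d.e j = ι j ∘ₗ ρ j := by ext u; simp [hιρ]
    have h2 : ρ j ∘ₗ ι j = LinearMap.id := LinearMap.ext fun v => hρι j v
    rw [h1, LinearMap.trace_comp_comm', h2]; simp
  · let x : Q.Rep K α := fun c => LinearMap.toMatrix' (ρ (Q.dh c) ∘ₗ d.E c ∘ₗ ι (Q.dt c))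
    have hxv : ∀ c v, (x c).mulVec v = ρ (Q.dh c) (d.E c (ι (Q.dt c) v)) := by
      intro c v
      have : Matrix.toLin' (x c) = (ρ (Q.dh c) ∘ₗ d.E c ∘ₗ ι (Q.dt c)) := Matrix.toLin'_toMatrix' _
      rw [← Matrix.toLin'_apply, this]; rfl
    refine ⟨x, fun i => ?_⟩
    apply (Matrix.toLin' (R := K)).injective
    refine LinearMap.ext fun v => ?_
    rw [Matrix.toLin'_apply, Matrix.toLin'_apply, Matrix.smul_mulVec, Matrix.one_mulVec]
    have h3 := congrArg (ρ i) (d.rel (ι i v))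
    have h4 : ρ i (∑ j, l j • d.e j (ι i v)) = l i • v := by
      rw [map_sum, Finset.sum_eq_single i]
      · rw [map_smul, hρe, hρι]
      · intro j _ hj
        rw [map_smul, hρ0 i j _ (Ne.symm hj), smul_zero]
      · simp
    rw [← h4, ← h3, Fintype.sum_sum_type, moment, Matrix.sub_mulVec, Matrix.sum_mulVec,
      Matrix.sum_mulVec, map_add, map_sum, map_sum, sub_eq_add_neg,
      ← Finset.sum_neg_distrib]
    congr 1
    · refine Finset.sum_congr rfl fun a _ => ?_
      split_ifs with h
      · subst h
        have h5 := hxv (Sum.inl a) ((x (Sum.inr a)).mulVec v)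
        rw [hxv (Sum.inr a), hιρ, d.te (Sum.inl a) ] at h5
        simp only [eps, st, one_smul]
        rw [← h5]
        rw [← hxv (Sum.inr a), Matrix.mulVec_mulVec]; rfl
      · have h5 := d.he (Sum.inl a) (d.E (Sum.inr a) (ι i v))
        simp only [eps, st, one_smul]
        rw [← h5, hρ0 i _ _ (Ne.symm h), Matrix.zero_mulVec]
    · refine Finset.sum_congr rfl fun a _ => ?_
      split_ifs with h
      · subst h
        have h5 := hxv (Sum.inr a) ((x (Sum.inl a)).mulVec v)
        rw [hxv (Sum.inl a), hιρ, d.te (Sum.inr a) ] at h5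
        simp only [eps, st, neg_smul, one_smul, map_neg]
        rw [← h5]
        rw [← hxv (Sum.inl a), Matrix.mulVec_mulVec]; rfl
      · have h5 := d.he (Sum.inr a) (d.E (Sum.inl a) (ι i v))
        simp only [eps, st, neg_smul, one_smul, map_neg]
        rw [← h5, hρ0 i _ _ (Ne.symm h), Matrix.zero_mulVec]
theorem bil_ev_ev {Q : FinQuiver} (i j : Q.I) : Q.bil (Q.ev i) (Q.ev j) =
    (if i = j then 2 else 0) - ∑ c : Q.DA, if Q.dh c = i ∧ Q.dt c = j then 1 else 0 := by
  rw [bil]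
  congr 1
  · rw [Finset.sum_eq_single i]
    · simp [ev]
    · intro k _ hk; simp [ev, hk]
    · simp
  · refine Finset.sum_congr rfl fun c _ => ?_
    simp only [ev]
    split_ifs <;> simp_all

theorem bil_ev_right {Q : FinQuiver} (α : Q.I → ℤ) (i : Q.I) : Q.bil α (Q.ev i) =
    2 * α i - ∑ c : Q.DA, if Q.dh c = i then α (Q.dt c) else 0 := by
  rw [bil]
  congr 1
  · rw [Finset.sum_eq_single i]
    · simp [ev]
    · intro k _ hk; simp [ev, hk]
    · simp
  · rw [← sum_st]
    refine Finset.sum_congr rfl fun c _ => ?_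
    simp only [ev, dh_st, dt_st]
    split_ifs <;> simp

theorem Datum.reflect {Q : FinQuiver} {K : Type} [Field K] [CharZero K] {T : Type}
    [AddCommGroup T] [Module K T] [FiniteDimensional K T] {l : Q.I → K} (d : Datum Q K T l)
    (i : Q.I) (hi : Q.Loopfree i) (hl : l i ≠ 0) :
    ∃ d' : Datum Q K (T × (Q.DA → T)) (Q.coRefl K i l),
      (∀ j, j ≠ i → LinearMap.trace K _ (d'.e j) = LinearMap.trace K T (d.e j)) ∧
      LinearMap.trace K _ (d'.e i) =
        (∑ c : Q.DA, if Q.dh c = i then LinearMap.trace K T (d.e (Q.dt c)) else 0)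
          - LinearMap.trace K T (d.e i) := by
  classical
  have hloop : ∀ c : Q.DA, Q.dh c = i → Q.dt c ≠ i := by
    intro c h1 h2
    rcases c with a | a
    · exact hi a ⟨h1, h2⟩
    · exact hi a ⟨h2, h1⟩
  let μ : T →ₗ[K] (Q.DA → T) := LinearMap.pi fun c =>
    if Q.dh c = i then Q.eps K c • d.E (Q.st c) else 0
  let π : (Q.DA → T) →ₗ[K] T := ∑ c : Q.DA,
    if Q.dh c = i then d.E c ∘ₗ LinearMap.proj c else 0
  let f : (Q.DA → T) →ₗ[K] (Q.DA → T) := LinearMap.pi fun c =>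
    if Q.dh c = i then d.e (Q.dt c) ∘ₗ LinearMap.proj c else 0
  have hμ : ∀ u c, μ u c = if Q.dh c = i then Q.eps K c • d.E (Q.st c) u else 0 := by
    intro u c
    simp only [μ, LinearMap.pi_apply]
    split_ifs <;> rfl
  have hπ : ∀ s, π s = ∑ c : Q.DA, if Q.dh c = i then d.E c (s c) else 0 := by
    intro s
    simp only [π, LinearMap.sum_apply]
    refine Finset.sum_congr rfl fun c _ => ?_
    split_ifs <;> rfl
  have hf : ∀ s c, f s c = if Q.dh c = i then d.e (Q.dt c) (s c) else 0 := by
    intro s c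
    simp only [f, LinearMap.pi_apply]
    split_ifs <;> rfl
  have hff : ∀ s, f (f s) = f s := by
    intro s; funext c
    rw [hf, hf]
    split_ifs
    · exact d.idem _ _
    · rfl
  have hfμ : ∀ u, f (μ u) = μ u := by
    intro u; funext c
    rw [hf, hμ]
    split_ifs
    · have := d.he (Q.st c) u
      rw [dh_st] at this
      rw [map_smul, this]
    · rfl
  have hπf : ∀ s, π (f s) = π s := by
    intro s
    rw [hπ, hπ]
    refine Finset.sum_congr rfl fun c _ => ?_
    split_ifs with h
    · rw [hf, if_pos h, d.te]
    · rfl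
  have heπ : ∀ s, d.e i (π s) = π s := by
    intro s
    rw [hπ, map_sum]
    refine Finset.sum_congr rfl fun c _ => ?_
    split_ifs with h
    · subst h; exact d.he _ _
    · exact map_zero _
  have hμe : ∀ u, μ (d.e i u) = μ u := by
    intro u; funext c
    rw [hμ, hμ]
    split_ifs with h
    · have := d.te (Q.st c) u
      rw [dt_st, h] at this
      rw [this]
    · rfl
  have hsplit : ∀ u, ∑ c : Q.DA, (if Q.dh c = i then Q.eps K c • d.E c (d.E (Q.st c) u) else 0)
      = l i • d.e i u := by
    intro u
    have h1 := congrArg (d.e i) (d.rel u)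
    rw [map_sum, map_sum, Finset.sum_eq_single (a := i) (s := Finset.univ)
      (f := fun j => d.e i (l j • d.e j u))] at h1
    · rw [map_smul, d.idem] at h1
      rw [← h1]
      refine Finset.sum_congr rfl fun c _ => ?_
      rw [map_smul]
      split_ifs with h
      · rw [← d.he c, h, d.idem]
      · rw [← d.he c, d.orth _ _ _ (Ne.symm h), smul_zero]
    · intro j _ hj
      rw [map_smul, d.orth _ _ _ (Ne.symm hj), smul_zero]
    · simp
  have hπμ : ∀ u, π (μ u) = l i • d.e i u := by
    intro u
    rw [hπ, ← hsplit]
    refine Finset.sum_congr rfl fun c _ => ?_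
    split_ifs with h
    · rw [hμ, if_pos h, map_smul]
    · rfl
  let P : (Q.DA → T) →ₗ[K] (Q.DA → T) := f - (l i)⁻¹ • (μ ∘ₗ π)
  have hP : ∀ s, P s = f s - (l i)⁻¹ • μ (π s) := fun s => rfl
  have hfP : ∀ s, f (P s) = P s := by
    intro s; rw [hP, map_sub, map_smul, hff, hfμ]
  have hPf : ∀ s, P (f s) = P s := by
    intro s; rw [hP, hP, hff, hπf]
  have hπP : ∀ s, π (P s) = 0 := by
    intro s
    rw [hP, map_sub, map_smul, hπf, hπμ, heπ, smul_smul, inv_mul_cancel₀ hl, one_smul, sub_self]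
  have hPP : ∀ s, P (P s) = P s := by
    intro s
    rw [hP (P s), hπP, hfP]; simp
  let e' : Q.I → (T × (Q.DA → T)) →ₗ[K] (T × (Q.DA → T)) := fun j =>
    if j = i then LinearMap.inr K T _ ∘ₗ P ∘ₗ LinearMap.snd K T _
    else LinearMap.inl K T _ ∘ₗ d.e j ∘ₗ LinearMap.fst K T _
  let E' : Q.DA → (T × (Q.DA → T)) →ₗ[K] (T × (Q.DA → T)) := fun c =>
    if Q.dh c = i then LinearMap.inr K T _ ∘ₗ (-(l i) • P) ∘ₗ
        LinearMap.single K (fun _ : Q.DA => T) c ∘ₗ d.e (Q.dt c) ∘ₗ LinearMap.fst K T _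
    else if Q.dt c = i then LinearMap.inl K T _ ∘ₗ (Q.eps K (Q.st c) • d.e (Q.dh c)) ∘ₗ
        LinearMap.proj (Q.st c) ∘ₗ P ∘ₗ LinearMap.snd K T _
    else LinearMap.inl K T _ ∘ₗ d.E c ∘ₗ LinearMap.fst K T _
  have he1 : ∀ w, e' i w = (0, P w.2) := by
    intro w; simp [e']
  have he2 : ∀ j w, j ≠ i → e' j w = (d.e j w.1, 0) := by
    intro j w hj; simp [e', hj]
  have hE1 : ∀ c w, Q.dh c = i →
      E' c w = (0, -(l i) • P (Pi.single c (d.e (Q.dt c) w.1))) := by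
    intro c w h; simp [E', h]
  have hE2 : ∀ c w, Q.dt c = i → E' c w =
      (Q.eps K (Q.st c) • d.e (Q.dh c) (P w.2 (Q.st c)), 0) := by
    intro c w h
    have h' : Q.dh c ≠ i := fun h' => hloop c h' h
    simp [E', h, h']
  have hE3 : ∀ c w, Q.dh c ≠ i → Q.dt c ≠ i → E' c w = (d.E c w.1, 0) := by
    intro c w h h'
    simp [E', h, h']
  have hidem : ∀ j u, e' j (e' j u) = e' j u := by
    intro j u
    by_cases hj : j = i
    · subst hj; rw [he1, he1, hPP]
    · rw [he2 _ _ hj, he2 _ _ hj, d.idem]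
  refine ⟨⟨e', E', hidem, ?_, ?_, ?_, ?_⟩, ?_, ?_⟩
  · intro j k u hjk
    by_cases hj : j = i
    · subst hj
      rw [he1, he2 k u (Ne.symm hjk)]; simp
    · rw [he2 j _ hj]
      by_cases hk : k = i
      · subst hk; rw [he1]; simp
      · rw [he2 k _ hk, d.orth _ _ _ hjk]; rfl
  · intro c w
    by_cases h : Q.dh c = i
    · rw [h, hE1 c w h, he1]
      simp only [map_smul, hPP]
    · rw [he2 _ _ h]
      by_cases h' : Q.dt c = i
      · rw [hE2 c w h', map_smul, d.idem]
      · rw [hE3 c w h h', d.he]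
  · intro c w
    by_cases h : Q.dh c = i
    · rw [he2 _ _ (hloop c h), hE1 c _ h, hE1 c _ h, d.idem]
    · by_cases h' : Q.dt c = i
      · rw [h', he1, hE2 c _ h', hE2 c _ h', hPP]
      · rw [he2 _ _ h', hE3 c _ h h', hE3 c _ h h', d.te]
  · intro w
    have hterm : ∀ c, Q.eps K c • E' c (E' (Q.st c) w) =
        ((if Q.dh c = i then 0 else Q.eps K c • d.E c (d.E (Q.st c) w.1))
          + (if Q.dt c = i then l i • d.e (Q.dh c) w.1 else 0),
          if Q.dh c = i then -(l i) • P (Pi.single c (d.e (Q.dt c) (P w.2 c))) else 0) := by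
      intro c
      by_cases h : Q.dh c = i
      · have h' := hloop c h
        have h2 : Q.dt (Q.st c) = i := by rw [dt_st, h]
        rw [hE1 c _ h, hE2 (Q.st c) _ h2, if_pos h, if_pos h, if_neg h', st_st, dh_st]
        rw [map_smul, d.idem, Pi.single_smul, map_smul, smul_comm (-(l i)), Prod.smul_mk,
          smul_smul, eps_mul_self, one_smul]
        simp
      · by_cases h' : Q.dt c = i
        · have h2 : Q.dh (Q.st c) = i := by rw [dh_st, h']
          rw [hE2 c _ h', hE1 (Q.st c) _ h2, if_neg h, if_neg h, if_pos h', dt_st]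
          simp only [map_smul, hPP]
          rw [hP, Prod.smul_mk, smul_zero, hπ, Finset.sum_eq_single (Q.st c)]
          · rw [if_pos h2]
            simp only [Pi.smul_apply, Pi.sub_apply, hf, hμ, if_pos h2, Pi.single_eq_same, st_st]
            have h3 := d.te (Q.st c) w.1
            rw [dt_st] at h3
            have h4 := d.he c (d.E (Q.st c) w.1)
            rw [dt_st, d.idem, h3]
            simp only [map_smul, map_sub, d.idem, h4, eps_st]
            rw [Prod.mk.injEq]
            refine ⟨?_, rfl⟩
            have h5 := eps_mul_self (K := K) c
            simp only [smul_sub, smul_smul]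
            have h6 : Q.eps K c * (-Q.eps K c * -l i) = l i := by linear_combination l i * h5
            have h7 : Q.eps K c * (-Q.eps K c * (-l i * ((l i)⁻¹ * -Q.eps K c))) = - Q.eps K c := by
              field_simp
              linear_combination (- Q.eps K c) * h5
            rw [h6, h7, neg_smul, sub_neg_eq_add, add_comm]
          · intro b _ hb
            rw [Pi.single_eq_of_ne hb]; simp
          · simp
        · have h2 : Q.dh (Q.st c) ≠ i := by rwa [dh_st]
          have h3 : Q.dt (Q.st c) ≠ i := by rwa [dt_st]
          rw [hE3 c _ h h', hE3 _ _ h2 h3, if_neg h, if_neg h, if_neg h']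
          simp
    rw [Finset.sum_congr rfl fun c _ => hterm c]
    apply Prod.ext
    · rw [Prod.fst_sum, Prod.fst_sum]
      simp only
      rw [Finset.sum_add_distrib]
      have h1 : ∑ c : Q.DA, (if Q.dh c = i then 0 else Q.eps K c • d.E c (d.E (Q.st c) w.1)) =
          ∑ j, (if j = i then 0 else l j • d.e j w.1) := by
        have h2 := d.rel w.1
        have h3 := hsplit w.1
        have h4 : ∑ j, (if j = i then l j • d.e j w.1 else 0) = l i • d.e i w.1 := by simp
        rw [← h4] at h3
        have h5 := congrArg₂ (fun a b : T => a - b) h2 h3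
        simp only [← Finset.sum_sub_distrib] at h5
        refine Eq.trans (Finset.sum_congr rfl fun c _ => ?_) (h5.trans
          (Finset.sum_congr rfl fun c _ => ?_))
        · split_ifs <;> simp
        · split_ifs <;> simp
      have h2 : ∑ c : Q.DA, (if Q.dt c = i then l i • d.e (Q.dh c) w.1 else 0) =
          ∑ j, ∑ c : Q.DA, (if Q.dh c = i ∧ Q.dt c = j then l i • d.e j w.1 else 0) := by
        rw [← sum_st, Finset.sum_comm]
        refine Finset.sum_congr rfl fun c _ => ?_
        rw [dt_st, dh_st]
        by_cases h : Q.dh c = i <;> simp [h]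
      rw [h1, h2, ← Finset.sum_add_distrib]
      refine Finset.sum_congr rfl fun j _ => ?_
      by_cases hj : j = i
      · subst hj
        rw [if_pos rfl, he1, zero_add]
        rw [Finset.sum_eq_zero]
        · simp
        · intro c _
          rw [if_neg]
          exact fun h => hloop c h.1 h.2
      · rw [if_neg hj, he2 _ _ hj, coRefl, bil_ev_ev, if_neg (Ne.symm hj)]
        simp only [zero_sub, Int.cast_neg, neg_mul, sub_neg_eq_add, Prod.smul_mk, add_smul]
        congr 1
        push_cast
        rw [Finset.sum_mul, Finset.sum_smul]
        refine Finset.sum_congr rfl fun c _ => ?_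
        split_ifs <;> simp
    · rw [Prod.snd_sum, Prod.snd_sum]
      simp only
      rw [Finset.sum_eq_single (a := i) (s := Finset.univ)
        (f := fun j => (Q.coRefl K i l j • e' j w).2)]
      · rw [he1]
        have h1 : Q.coRefl K i l i = - l i := by
          rw [coRefl, bil_ev_ev, if_pos rfl, Finset.sum_eq_zero]
          · push_cast; ring
          · intro c _
            rw [if_neg]
            exact fun h => hloop c h.1 h.2
        have h2 : ∑ c : Q.DA, (if Q.dh c = i then
            -(l i) • P (Pi.single c (d.e (Q.dt c) (P w.2 c))) else 0) = -(l i) • P (f (P w.2)) := by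
          have h3 : f (P w.2) = ∑ c : Q.DA, if Q.dh c = i then
              (Pi.single c (d.e (Q.dt c) (P w.2 c)) : Q.DA → T) else 0 := by
            rw [← Finset.univ_sum_single (f (P w.2))]
            refine Finset.sum_congr rfl fun c _ => ?_
            rw [hf]
            split_ifs
            · rfl
            · simp
          rw [h3, map_sum, Finset.smul_sum]
          refine Finset.sum_congr rfl fun c _ => ?_
          split_ifs <;> simp
        rw [h1, h2, hPf, hPP]; rfl
      · intro j _ hj
        rw [he2 _ _ hj]; simp
      · simp
  · intro j hj
    have h1 : e' j = LinearMap.inl K T _ ∘ₗ (d.e j ∘ₗ LinearMap.fst K T (Q.DA → T)) := by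
      simp [e', hj]
    rw [show (Datum.mk e' E' hidem _ _ _ _ : Datum Q K (T × (Q.DA → T)) (Q.coRefl K i l)).e j
      = e' j from rfl, h1, LinearMap.trace_comp_comm']
    congr 1
  · have h1 : e' i = LinearMap.inr K T _ ∘ₗ (P ∘ₗ LinearMap.snd K T (Q.DA → T)) := by
      simp [e']
    rw [show (Datum.mk e' E' hidem _ _ _ _ : Datum Q K (T × (Q.DA → T)) (Q.coRefl K i l)).e i
      = e' i from rfl, h1, LinearMap.trace_comp_comm']
    have h2 : (P ∘ₗ LinearMap.snd K T (Q.DA → T)) ∘ₗ LinearMap.inr K T _ = P := by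
      refine LinearMap.ext fun s => ?_
      simp
    rw [h2, map_sub, map_smul, LinearMap.trace_comp_comm']
    have h3 : π ∘ₗ μ = l i • d.e i := LinearMap.ext hπμ
    rw [h3, map_smul, smul_smul, inv_mul_cancel₀ hl, one_smul]
    congr 1
    have h4 : f = ∑ c : Q.DA, if Q.dh c = i then LinearMap.single K (fun _ : Q.DA => T) c ∘ₗ
        (d.e (Q.dt c) ∘ₗ LinearMap.proj c) else 0 := by
      refine LinearMap.ext fun s => ?_
      rw [← Finset.univ_sum_single (f s), LinearMap.sum_apply]
      refine Finset.sum_congr rfl fun c _ => ?_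
      rw [hf]
      split_ifs
      · rfl
      · simp
    rw [h4, map_sum]
    refine Finset.sum_congr rfl fun c _ => ?_
    split_ifs
    · rw [LinearMap.trace_comp_comm']
      congr 1
      refine LinearMap.ext fun s => ?_
      simp
    · simp

/-- Reflection functors on nonempty fibres. -/
theorem Nn.reflect {Q : FinQuiver} {K : Type} [Field K] [CharZero K] {l : Q.I → K}
    {α : Q.I → ℕ} (h : Nn l α) (i : Q.I) (hi : Q.Loopfree i) (hl : l i ≠ 0) :
    ∃ α' : Q.I → ℕ, Q.toZ α' = Q.refl i (Q.toZ α) ∧ Nn (Q.coRefl K i l) α' := by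
  obtain ⟨d, hd⟩ := h.toDatum
  obtain ⟨d', h1, h2⟩ := d.reflect i hi hl
  obtain ⟨α', h3, h4⟩ := d'.toNn
  refine ⟨α', ?_, h4⟩
  funext j
  simp only [refl, Pi.sub_apply, Pi.smul_apply, smul_eq_mul]
  by_cases hj : j = i
  · subst hj
    rw [h3] at h2
    simp only [hd] at h2
    rw [bil_ev_right]
    have h5 : (Q.toZ α' j) = (∑ c : Q.DA, if Q.dh c = j then Q.toZ α (Q.dt c) else 0)
        - Q.toZ α j := by
      have : ((Q.toZ α' j : ℤ) : K) = (((∑ c : Q.DA, if Q.dh c = j then Q.toZ α (Q.dt c) else 0)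
        - Q.toZ α j : ℤ) : K) := by
        simp only [toZ]
        push_cast
        exact h2
      exact_mod_cast this
    rw [h5]
    simp [ev]
    ring
  · have h5 := h1 j hj
    rw [h3, hd] at h5
    have h6 : α' j = α j := by exact_mod_cast h5
    simp [ev, hj, toZ, h6]

end Datum

end FinQuiver

namespace FinQuiver

section Roots

variable {Q : FinQuiver}

theorem bil_add_left (α β γ : Q.I → ℤ) : Q.bil (α + β) γ = Q.bil α γ + Q.bil β γ := by
  simp only [bil, Pi.add_apply]
  rw [sub_add_sub_comm, ← Finset.sum_add_distrib, ← Finset.sum_add_distrib]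
  congr 1 <;> exact Finset.sum_congr rfl fun i _ => by ring

theorem bil_smul_left (n : ℤ) (α γ : Q.I → ℤ) : Q.bil (n • α) γ = n * Q.bil α γ := by
  simp only [bil, Pi.smul_apply, smul_eq_mul]
  rw [mul_sub, Finset.mul_sum, Finset.mul_sum]
  congr 1 <;> exact Finset.sum_congr rfl fun i _ => by ring

theorem bil_comm (α γ : Q.I → ℤ) : Q.bil α γ = Q.bil γ α := by
  simp only [bil]
  congr 1
  · exact Finset.sum_congr rfl fun i _ => by ring
  · rw [← sum_st]
    exact Finset.sum_congr rfl fun c _ => by rw [dh_st, dt_st]; ring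

theorem bil_neg_left (α γ : Q.I → ℤ) : Q.bil (-α) γ = - Q.bil α γ := by
  have := bil_smul_left (-1) α γ
  rwa [neg_one_smul, neg_one_mul] at this

theorem bil_neg_neg (α : Q.I → ℤ) : Q.bil (-α) (-α) = Q.bil α α := by
  rw [bil_neg_left, bil_comm, bil_neg_left, neg_neg]

theorem bil_sub_left (α β γ : Q.I → ℤ) : Q.bil (α - β) γ = Q.bil α γ - Q.bil β γ := by
  rw [sub_eq_add_neg, bil_add_left, bil_neg_left, sub_eq_add_neg]

theorem bil_sub_right (α β γ : Q.I → ℤ) : Q.bil γ (α - β) = Q.bil γ α - Q.bil γ β := by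
  rw [bil_comm, bil_sub_left, bil_comm α, bil_comm β]

theorem bil_smul_right (n : ℤ) (α γ : Q.I → ℤ) : Q.bil γ (n • α) = n * Q.bil γ α := by
  rw [bil_comm, bil_smul_left, bil_comm]

theorem two_pp (α : Q.I → ℤ) : 2 * Q.pp α = 2 - Q.bil α α := by
  have h1 : ∑ i, 2 * α i * α i = 2 * ∑ i, α i * α i := by
    rw [Finset.mul_sum]
    exact Finset.sum_congr rfl fun i _ => by ring
  have h2 : ∑ a : Q.A, α (Q.h a) * α (Q.t a) = ∑ a : Q.A, α (Q.t a) * α (Q.h a) :=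
    Finset.sum_congr rfl fun i _ => by ring
  simp only [pp, bil, Fintype.sum_sum_type]
  rw [h1, h2]
  ring

theorem bil_ev_self {i : Q.I} (hi : Q.Loopfree i) : Q.bil (Q.ev i) (Q.ev i) = 2 := by
  rw [bil_ev_ev, if_pos rfl, Finset.sum_eq_zero, sub_zero]
  intro c _
  rw [if_neg]
  rcases c with a | a
  · exact fun h => hi a h
  · exact fun h => hi a ⟨h.2, h.1⟩

theorem refl_refl {i : Q.I} (hi : Q.Loopfree i) (α : Q.I → ℤ) : Q.refl i (Q.refl i α) = α := by
  have : Q.bil (Q.refl i α) (Q.ev i) = - Q.bil α (Q.ev i) := by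
    rw [refl, bil_sub_left, bil_smul_left, bil_ev_self hi]; ring
  rw [refl, this, refl, neg_smul]
  abel

theorem refl_neg (i : Q.I) (α : Q.I → ℤ) : Q.refl i (-α) = - Q.refl i α := by
  rw [refl, refl, bil_neg_left, neg_smul]; abel

theorem refl_add (i : Q.I) (α β : Q.I → ℤ) : Q.refl i (α + β) = Q.refl i α + Q.refl i β := by
  rw [refl, refl, refl, bil_add_left, add_smul]; abel

theorem refl_smul (i : Q.I) (n : ℤ) (α : Q.I → ℤ) : Q.refl i (n • α) = n • Q.refl i α := by
  rw [refl, refl, bil_smul_left, smul_sub, smul_smul]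

theorem refl_ev {i : Q.I} (hi : Q.Loopfree i) : Q.refl i (Q.ev i) = - Q.ev i := by
  rw [refl, bil_ev_self hi, two_smul]; abel

theorem bil_refl {i : Q.I} (hi : Q.Loopfree i) (α : Q.I → ℤ) :
    Q.bil (Q.refl i α) (Q.refl i α) = Q.bil α α := by
  rw [refl]
  simp only [bil_sub_left, bil_sub_right, bil_smul_left, bil_smul_right]
  rw [bil_ev_self hi, bil_comm (Q.ev i)]
  ring

theorem refl_zero (i : Q.I) : Q.refl i 0 = 0 := by
  have := refl_smul i 0 (0 : Q.I → ℤ)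
  simpa using this

theorem bil_eq_sum_ev (α γ : Q.I → ℤ) : Q.bil γ α = ∑ i, α i * Q.bil γ (Q.ev i) := by
  have h : ∀ i, α i * Q.bil γ (Q.ev i) = (2 * γ i * α i) -
      ∑ c : Q.DA, if Q.dh c = i then γ (Q.dt c) * α i else 0 := by
    intro i
    rw [bil_ev_right, mul_sub, Finset.mul_sum]
    congr 1
    · ring
    · refine Finset.sum_congr rfl fun c _ => ?_
      split_ifs <;> ring
  simp only [h]
  rw [Finset.sum_sub_distrib, bil_comm, bil, Finset.sum_comm]
  congr 1
  · exact Finset.sum_congr rfl fun i _ => by ring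
  · refine Finset.sum_congr rfl fun c _ => ?_
    simp only [Finset.sum_ite_eq, Finset.mem_univ, if_true]
    ring

variable {K : Type} [Field K]

theorem coRefl_self {i : Q.I} (hi : Q.Loopfree i) (l : Q.I → K) : Q.coRefl K i l i = - l i := by
  rw [coRefl, bil_ev_self hi]; push_cast; ring

theorem coRefl_coRefl {i : Q.I} (hi : Q.Loopfree i) (l : Q.I → K) :
    Q.coRefl K i (Q.coRefl K i l) = l := by
  funext j
  rw [coRefl, coRefl_self hi, coRefl]; ring

theorem pair_ev (l : Q.I → K) (i : Q.I) : Q.pair K l (Q.ev i) = l i := by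
  simp [pair, ev]

theorem pair_sub (l : Q.I → K) (α β : Q.I → ℤ) :
    Q.pair K l (α - β) = Q.pair K l α - Q.pair K l β := by
  simp [pair, mul_sub, Finset.sum_sub_distrib]

theorem pair_neg (l : Q.I → K) (α : Q.I → ℤ) :
    Q.pair K l (-α) = - Q.pair K l α := by
  simp [pair]

theorem pair_smul (l : Q.I → K) (n : ℤ) (α : Q.I → ℤ) :
    Q.pair K l (n • α) = n * Q.pair K l α := by
  simp only [pair, Pi.smul_apply, smul_eq_mul, Finset.mul_sum]
  exact Finset.sum_congr rfl fun i _ => by push_cast; ring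

theorem pair_coRefl (i : Q.I) (l : Q.I → K) (α : Q.I → ℤ) :
    Q.pair K (Q.coRefl K i l) α = Q.pair K l (Q.refl i α) := by
  rw [refl, pair_sub, pair_smul, pair_ev, bil_comm, bil_eq_sum_ev]
  simp only [pair, coRefl, sub_mul, Finset.sum_sub_distrib]
  push_cast
  rw [Finset.sum_mul]
  congr 1
  exact Finset.sum_congr rfl fun i _ => by ring

theorem toZ_injective : Function.Injective Q.toZ := by
  intro α β h
  funext i
  have := congrFun h i
  simpa [toZ] using this

theorem toZ_evN (i : Q.I) : Q.toZ (Q.evN i) = Q.ev i := by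
  funext j
  simp only [toZ, evN, ev]
  split_ifs <;> rfl

theorem Nn_evN {l : Q.I → K} {i : Q.I} (h : l i = 0) : Nn l (Q.evN i) := by
  refine ⟨fun _ => 0, fun j => ?_⟩
  have h1 : Q.moment K (Q.evN i) (fun _ => 0) j = 0 := by
    simp [moment]
  rw [h1]
  by_cases hj : j = i
  · subst hj; rw [h, zero_smul]
  · ext a b
    have h2 := a.2
    simp [evN, hj] at h2

/-- Every fibre orthogonal to the dimension vector is nonempty. -/
def AllNn (K : Type) [Field K] (γ : Q.I → ℤ) : Prop :=
  ∃ α : Q.I → ℕ, Q.toZ α = γ ∧ ∀ l : Q.I → K, Q.pair K l γ = 0 → Nn l α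

theorem AllNn.step [CharZero K] [IsAlgClosed K] {γ : Q.I → ℤ} (h : AllNn K γ)
    (hb : Q.bil γ γ = 2) {i : Q.I} (hi : Q.Loopfree i) :
    AllNn K (Q.refl i γ) ∨ AllNn K (-(Q.refl i γ)) := by
  by_cases hγ : γ = Q.ev i
  · right
    rwa [hγ, refl_ev hi, neg_neg, ← hγ]
  left
  obtain ⟨α, hα, hall⟩ := h
  have hb' : Q.bil (Q.refl i γ) (Q.refl i γ) = 2 := by rw [bil_refl hi, hb]
  have hne : Q.refl i γ ≠ 0 := by
    intro h0
    rw [h0] at hb'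
    simp [bil] at hb'
  obtain ⟨l', hl', hgen⟩ := exists_generic Q K (Q.refl i γ) hne
  have hli : l' i ≠ 0 := by
    intro h0
    have h1 := hgen (Q.ev i) (by rw [pair_ev, h0]) i
    have h2 : Q.refl i γ = Q.refl i γ i • Q.ev i := by
      funext j
      have := h1 j
      simp only [Pi.smul_apply, smul_eq_mul]
      rw [mul_comm, ← this]
      simp [ev]
    set m := Q.refl i γ i with hm
    rw [h2, bil_smul_left, bil_smul_right, bil_ev_self hi] at hb'
    have h3 : γ = -(m • Q.ev i) := by
      rw [← refl_refl hi γ, h2, refl_smul, refl_ev hi, smul_neg]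
    have h4 : m * m = 1 := by linarith
    have h5 : 0 ≤ -m := by
      have h6 := congrFun h3 i
      rw [← hα] at h6
      simp only [toZ, Pi.neg_apply, Pi.smul_apply, ev, smul_eq_mul, if_true, mul_one] at h6
      omega
    have h6 : m = -1 := by nlinarith
    apply hγ
    rw [h3, h6]; simp
  have h1 : Nn (Q.coRefl K i l') α := hall _ (by rw [pair_coRefl, hl'])
  obtain ⟨α', h2, h3⟩ := h1.reflect i hi (by rw [coRefl_self hi]; exact neg_ne_zero.mpr hli)
  rw [coRefl_coRefl hi] at h3
  rw [hα] at h2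
  refine ⟨α', h2, fun l hl => lift_all ?_ h3 l (by rw [h2, hl])⟩
  rw [h2]; exact hgen

theorem root_cases (K : Type) [Field K] [CharZero K] [IsAlgClosed K] {γ : Q.I → ℤ}
    (h : Q.IsRoot γ) :
    Q.bil γ γ ≤ 0 ∨ (Q.bil γ γ = 2 ∧ (AllNn K γ ∨ AllNn K (-γ))) := by
  have hfund : ∀ α : Q.I → ℤ, Q.InFund α → Q.bil α α ≤ 0 := by
    intro α hα
    rw [bil_eq_sum_ev]
    exact Finset.sum_nonpos fun i _ =>
      mul_nonpos_of_nonneg_of_nonpos (hα.2.1 i) (hα.2.2.2 i)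
  induction h with
  | simple i hi =>
    exact Or.inr ⟨bil_ev_self hi, Or.inl ⟨Q.evN i, toZ_evN i,
      fun l hl => Nn_evN (by rwa [pair_ev] at hl)⟩⟩
  | fund α hα => exact Or.inl (hfund α hα)
  | neg_fund α hα => rw [bil_neg_neg]; exact Or.inl (hfund α hα)
  | reflect i hi α _ ih =>
    rw [bil_refl hi]
    refine ih.imp id fun ih => ⟨ih.1, ?_⟩
    rcases ih.2 with h | h
    · exact h.step ih.1 hi
    · have := h.step (by rw [bil_neg_neg, ih.1]) hi
      rw [refl_neg, neg_neg] at this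
      exact this.symm

theorem root_pp_nonneg (K : Type) [Field K] [CharZero K] [IsAlgClosed K] {γ : Q.I → ℤ}
    (h : Q.IsRoot γ) : 0 ≤ Q.pp γ := by
  have h1 := two_pp γ
  rcases root_cases K h with h2 | h2
  · omega
  · omega

theorem real_root_Nn [CharZero K] [IsAlgClosed K] {β : Q.I → ℕ}
    (h : Q.IsRoot (Q.toZ β)) (hp : Q.pp (Q.toZ β) = 0) {l : Q.I → K}
    (hl : Q.pair K l (Q.toZ β) = 0) : Nn l β := by
  have h1 := two_pp (Q.toZ β)
  rcases root_cases K h with h2 | ⟨h2, h3 | h3⟩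
  · omega
  · obtain ⟨α, h4, h5⟩ := h3
    rw [← toZ_injective h4]
    exact h5 l hl
  · obtain ⟨α, h4, h5⟩ := h3
    exfalso
    have h6 : Q.toZ β = 0 := by
      funext i
      have := congrFun h4 i
      simp only [toZ, Pi.neg_apply, Pi.zero_apply] at this ⊢
      omega
    rw [h6] at h2
    simp [bil] at h2

theorem loopfree_of_bil_pos {α : Q.I → ℕ} {i : Q.I} (h : 0 < Q.bil (Q.toZ α) (Q.ev i)) :
    Q.Loopfree i := by
  intro a ha
  rw [bil_ev_right, Fintype.sum_sum_type] at h
  have hnn : ∀ c : Q.DA, 0 ≤ (if Q.dh c = i then Q.toZ α (Q.dt c) else 0) := by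
    intro c
    split_ifs
    · exact Int.natCast_nonneg _
    · exact le_rfl
  have h1 := Finset.single_le_sum (f := fun a : Q.A => if Q.dh (Sum.inl a) = i then
    Q.toZ α (Q.dt (Sum.inl a)) else 0) (fun b _ => hnn (Sum.inl b)) (Finset.mem_univ a)
  have h2 := Finset.single_le_sum (f := fun a : Q.A => if Q.dh (Sum.inr a) = i then
    Q.toZ α (Q.dt (Sum.inr a)) else 0) (fun b _ => hnn (Sum.inr b)) (Finset.mem_univ a)
  simp only [ha.1, ha.2, if_true] at h1 h2
  linarith

end Roots

end FinQuiver

namespace FinQuiver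

section Simples

variable {Q : FinQuiver} {K : Type} [Field K]

theorem toZ_add (α β : Q.I → ℕ) : Q.toZ (α + β) = Q.toZ α + Q.toZ β := by
  funext i; simp [toZ]

theorem toZ_eq_zero {α : Q.I → ℕ} : Q.toZ α = 0 ↔ α = 0 := by
  constructor
  · intro h
    apply toZ_injective
    rw [h]; funext i; simp [toZ]
  · rintro rfl; funext i; simp [toZ]

theorem Irr_evN {l : Q.I → K} {i : Q.I} (h : l i = 0) : Irr l (Q.evN i) := by
  refine ⟨Nn_evN h, ?_, ?_⟩
  · intro h0
    have := congrFun h0 i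
    simp [evN] at this
  · intro δ δ' hd _ _
    have hz : ∀ j, (if j = i then 1 else 0) = δ j + δ' j := fun j => congrFun hd j
    have hi := hz i
    rw [if_pos rfl] at hi
    have ho : ∀ j, j ≠ i → δ j = 0 ∧ δ' j = 0 := by
      intro j hj
      have := hz j
      rw [if_neg hj] at this
      omega
    by_cases h1 : δ i = 0
    · left; funext j
      by_cases hj : j = i
      · rw [hj, h1]; rfl
      · exact (ho j hj).1
    · right; funext j
      by_cases hj : j = i
      · rw [hj]; simp only [Pi.zero_apply]; omega
      · exact (ho j hj).2

theorem Irr.reflect [CharZero K] {l : Q.I → K} {α : Q.I → ℕ} (h : Irr l α) {i : Q.I}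
    (hi : Q.Loopfree i) (hl : l i ≠ 0) :
    ∃ α' : Q.I → ℕ, Q.toZ α' = Q.refl i (Q.toZ α) ∧ Irr (Q.coRefl K i l) α' := by
  obtain ⟨α', h1, h2⟩ := h.1.reflect i hi hl
  have hl' : Q.coRefl K i l i ≠ 0 := by rw [coRefl_self hi]; exact neg_ne_zero.mpr hl
  have hback : ∀ δ η : Q.I → ℕ, Q.toZ η = Q.refl i (Q.toZ δ) → η = 0 → δ = 0 := by
    intro δ η h3 h4
    rw [h4, toZ_eq_zero.mpr rfl] at h3
    rw [← toZ_eq_zero, ← refl_refl hi (Q.toZ δ), ← h3, refl_zero]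
  refine ⟨α', h1, h2, ?_, ?_⟩
  · intro h0
    exact h.2.1 (hback α α' h1 h0)
  · intro δ δ' hd hδ hδ'
    obtain ⟨η, e1, e2⟩ := hδ.reflect i hi hl'
    obtain ⟨η', e1', e2'⟩ := hδ'.reflect i hi hl'
    rw [coRefl_coRefl hi] at e2 e2'
    have : α = η + η' := by
      apply toZ_injective
      rw [toZ_add, e1, e1', ← refl_add, ← toZ_add, ← hd, h1, refl_refl hi]
    exact (h.2.2 η η' this e2 e2').imp (hback δ η e1) (hback δ' η' e1')

theorem Irr.suppConnected {l : Q.I → K} {α : Q.I → ℕ} (h : Irr l α) :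
    Q.SuppConnected (Q.toZ α) := by
  classical
  intro i j hi hj
  obtain ⟨x, hx⟩ := h.1
  set R := (fun x y => Q.toZ α x ≠ 0 ∧ Q.toZ α y ≠ 0 ∧ Q.Adj x y) with hR
  let U : ∀ k : Q.I, Submodule K (Fin (α k) → K) := fun k =>
    if Relation.ReflTransGen R i k then ⊤ else ⊥
  have hreach : ∀ k, Relation.ReflTransGen R i k → Q.toZ α k ≠ 0 := by
    intro k hk
    rcases Relation.ReflTransGen.cases_tail hk with h1 | ⟨b, _, h1⟩
    · rwa [h1]
    · exact h1.2.1
  have hU : Q.SubRep K α x U := by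
    intro c v hv
    by_cases h1 : Relation.ReflTransGen R i (Q.dt c)
    · by_cases h2 : α (Q.dh c) = 0
      · have : (x c).mulVec v = 0 := by
          funext k
          have := k.2
          omega
        rw [this]; exact Submodule.zero_mem _
      · have h3 : Relation.ReflTransGen R i (Q.dh c) := by
          refine h1.tail ⟨hreach _ h1, ?_, ?_⟩
          · simpa [toZ] using h2
          · rcases c with a | a
            · exact ⟨a, Or.inr ⟨rfl, rfl⟩⟩
            · exact ⟨a, Or.inl ⟨rfl, rfl⟩⟩
        simp only [U, if_pos h3, Submodule.mem_top]
    · simp only [U, if_neg h1, Submodule.mem_bot] at hv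
      rw [hv, Matrix.mulVec_zero]; exact Submodule.zero_mem _
  obtain ⟨δ, δ', hd, hf, h1, h2⟩ := Nn.split hx hU
  rcases h.2.2 δ δ' hd h1 h2 with h3 | h3
  · exfalso
    have h4 := hf i
    have h5 : Relation.ReflTransGen R i i := Relation.ReflTransGen.refl
    have h6 : U i = ⊤ := if_pos h5
    rw [h6, finrank_top, Module.finrank_fintype_fun_eq_card, Fintype.card_fin] at h4
    rw [h3] at h4
    apply hi
    simp [toZ, ← h4]
  · by_contra hcon
    have h4 := hf j
    have h6 : U j = ⊥ := if_neg hcon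
    rw [h6, finrank_bot] at h4
    apply hj
    rw [hd, h3]
    simp [toZ, h4]

theorem Irr.isRoot [CharZero K] [IsAlgClosed K] : ∀ (n : ℕ) (l : Q.I → K) (α : Q.I → ℕ),
    ∑ i, α i = n → Irr l α → Q.IsRoot (Q.toZ α) := by
  intro n
  induction n using Nat.strong_induction_on with
  | _ n ih =>
  intro l α hn h
  by_cases hb : ∃ i, 0 < Q.bil (Q.toZ α) (Q.ev i)
  · obtain ⟨i, hb⟩ := hb
    have hi := loopfree_of_bil_pos hb
    by_cases hl : l i = 0
    · obtain ⟨x, hx⟩ := h.1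
      have hS := Irr_evN (Q := Q) hl
      obtain ⟨y, hy⟩ := hS.1
      have : α = Q.evN i := by
        rcases exists_hom hx hy (by rwa [toZ_evN]) with ⟨f, h1, h2⟩ | ⟨f, h1, h2⟩
        · exact (hom_bijective hx hy h hS h1 h2).1
        · exact (hom_bijective hy hx hS h h1 h2).1.symm
      rw [this, toZ_evN]
      exact IsRoot.simple i hi
    · obtain ⟨α', h1, h2⟩ := h.reflect hi hl
      have hsum : ((∑ j, α' j : ℕ) : ℤ) = (∑ j, α j : ℕ) - Q.bil (Q.toZ α) (Q.ev i) := by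
        have h3 : ∑ j, Q.toZ α' j = ∑ j, Q.toZ α j - Q.bil (Q.toZ α) (Q.ev i) := by
          rw [h1, refl]
          simp [Finset.sum_sub_distrib, ev]
        simpa [toZ] using h3
      have := ih (∑ j, α' j) (by omega) _ α' rfl h2
      rw [h1] at this
      rw [← refl_refl hi (Q.toZ α)]
      exact IsRoot.reflect i hi _ this
  · push Not at hb
    refine IsRoot.fund _ ⟨fun h0 => h.2.1 (toZ_eq_zero.mp h0), fun i => Int.natCast_nonneg _,
      h.suppConnected, hb⟩

theorem Irr.mem_Rplus [CharZero K] [IsAlgClosed K] {l : Q.I → K} {α : Q.I → ℕ} (h : Irr l α) :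
    Q.toZ α ∈ Q.Rplus K l :=
  ⟨⟨Irr.isRoot _ l α rfl h, fun i => Int.natCast_nonneg _,
    fun h0 => h.2.1 (toZ_eq_zero.mp h0)⟩, h.1.pair_eq_zero⟩

theorem Nn.decomp [CharZero K] [IsAlgClosed K] : ∀ (n : ℕ) (l : Q.I → K) (α : Q.I → ℕ),
    ∑ i, α i = n → α ≠ 0 → Nn l α →
    ∃ L : List (Q.I → ℤ), L ≠ [] ∧ (∀ γ ∈ L, γ ∈ Q.Rplus K l) ∧ L.sum = Q.toZ α := by
  intro n
  induction n using Nat.strong_induction_on with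
  | _ n ih =>
  intro l α hn hα h
  by_cases hI : Irr l α
  · exact ⟨[Q.toZ α], by simp, by simpa using hI.mem_Rplus, by simp⟩
  · have : ∃ δ δ' : Q.I → ℕ, α = δ + δ' ∧ Nn l δ ∧ Nn l δ' ∧ δ ≠ 0 ∧ δ' ≠ 0 := by
      by_contra hcon
      push Not at hcon
      refine hI ⟨h, hα, fun δ δ' h1 h2 h3 => ?_⟩
      by_cases h4 : δ = 0
      · exact Or.inl h4
      · exact Or.inr (hcon δ δ' h1 h2 h3 h4)
    obtain ⟨δ, δ', h1, h2, h3, h4, h5⟩ := this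
    have hpos : ∀ δ : Q.I → ℕ, δ ≠ 0 → 0 < ∑ i, δ i := by
      intro δ hδ
      obtain ⟨i, hi⟩ := Function.ne_iff.mp hδ
      have := Finset.single_le_sum (f := δ) (fun _ _ => Nat.zero_le _) (Finset.mem_univ i)
      rw [Pi.zero_apply] at hi
      omega
    have hs : ∑ i, α i = ∑ i, δ i + ∑ i, δ' i := by
      rw [h1, ← Finset.sum_add_distrib]; rfl
    have p1 := hpos δ h4
    have p2 := hpos δ' h5
    obtain ⟨L, a1, a2, a3⟩ := ih _ (by omega) l δ rfl h4 h2
    obtain ⟨L', b1, b2, b3⟩ := ih _ (by omega) l δ' rfl h5 h3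
    refine ⟨L ++ L', by simp [a1], ?_, ?_⟩
    · intro γ hγ
      rcases List.mem_append.mp hγ with h | h
      · exact a2 γ h
      · exact b2 γ h
    · rw [List.sum_append, a3, b3, ← toZ_add, ← h1]

theorem sigma_Irr [CharZero K] [IsAlgClosed K] {l : Q.I → K} {β : Q.I → ℕ}
    (hβ : Q.toZ β ∈ Q.SigmaSet K l) (hreal : Q.pp (Q.toZ β) = 0) : Irr l β := by
  obtain ⟨⟨⟨hr, _, hne⟩, hp⟩, hdec⟩ := hβ
  have hN : Nn l β := real_root_Nn hr hreal hp
  refine ⟨hN, fun h0 => hne (toZ_eq_zero.mpr h0), fun δ δ' h1 h2 h3 => ?_⟩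
  by_contra hcon
  push Not at hcon
  obtain ⟨L, a1, a2, a3⟩ := Nn.decomp _ l δ rfl hcon.1 h2
  obtain ⟨L', b1, b2, b3⟩ := Nn.decomp _ l δ' rfl hcon.2 h3
  have hmem : ∀ γ ∈ L ++ L', γ ∈ Q.Rplus K l := by
    intro γ hγ
    rcases List.mem_append.mp hγ with h | h
    · exact a2 γ h
    · exact b2 γ h
  have c1 := List.length_pos_iff.mpr a1
  have c2 := List.length_pos_iff.mpr b1
  have := hdec (L ++ L').length (fun j => (L ++ L').get j) (by rw [List.length_append]; omega)
    (fun j => hmem _ (List.get_mem _ _)) (by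
      rw [h1, toZ_add, ← a3, ← b3, ← List.sum_append]
      simp only [List.get_eq_getElem, Fin.sum_univ_getElem])
  rw [hreal] at this
  have hnn : 0 ≤ ∑ j, Q.pp ((L ++ L').get j) :=
    Finset.sum_nonneg fun j _ => root_pp_nonneg K (hmem _ (List.get_mem _ _)).1.1
  omega

theorem fibre_transitive [CharZero K] [IsAlgClosed K] {l : Q.I → K} {β : Q.I → ℕ}
    (hI : Irr l β) (hreal : Q.pp (Q.toZ β) = 0) {x y : Q.Rep K β}
    (hx : x ∈ Q.MomentFiber K l β) (hy : y ∈ Q.MomentFiber K l β) :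
    (∃ g : Q.Gl K β, y = Q.glAct K β g x) ∨ (∃ g : Q.Gl K β, x = Q.glAct K β g y) := by
  have main : ∀ (x y : Q.Rep K β), x ∈ Q.MomentFiber K l β → y ∈ Q.MomentFiber K l β →
      (∃ f, IsHom x y f ∧ f ≠ 0) → ∃ g : Q.Gl K β, y = Q.glAct K β g x := by
    rintro x y hx hy ⟨f, hf, hne⟩
    have hb := (hom_bijective hx hy hI hI hf hne).2
    have hu : ∀ i, IsUnit (f i) := fun i => Matrix.mulVec_injective_iff_isUnit.mp (hb i).1
    refine ⟨fun i => (hu i).unit, ?_⟩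
    funext c
    have h1 : f (Q.dh c) * x c = y c * f (Q.dt c) := hf c
    have h2 : f (Q.dt c) * (((hu (Q.dt c)).unit⁻¹ : Matrix.GeneralLinearGroup _ K) :
        Matrix (Fin (β (Q.dt c))) (Fin (β (Q.dt c))) K) = 1 :=
      IsUnit.mul_val_inv (hu (Q.dt c))
    show y c = f (Q.dh c) * x c * _
    rw [h1, Matrix.mul_assoc, h2, Matrix.mul_one]
  have hpos : 0 < Q.bil (Q.toZ β) (Q.toZ β) := by
    have := two_pp (Q.toZ β)
    omega
  rcases exists_hom hx hy hpos with h | h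
  · exact Or.inl (main x y hx hy h)
  · exact Or.inr (main y x hy hx h)

end Simples

end FinQuiver

/-- if `β` is a real root (`p(β) = 0`) in `Σ_λ` then `N(λ,β)` is a
single (reduced) point, i.e. its coordinate ring is `K`. -/
theorem stmt2 (Q : FinQuiver) (K : Type) [Field K] [CharZero K] [IsAlgClosed K]
    (l : Q.I → K) (β : Q.I → ℕ)
    (hβ : Q.toZ β ∈ Q.SigmaSet K l) (hreal : Q.pp (Q.toZ β) = 0) :
    Nonempty (Q.InvRing K l β ≃ₐ[K] K) := by
  have hI := FinQuiver.sigma_Irr hβ hreal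
  obtain ⟨x0, hx0⟩ := hI.1
  have hconst : ∀ f ∈ Q.InvRing K l β, ∀ x, f x = f ⟨x0, hx0⟩ := by
    intro f hf x
    have hinv := (Algebra.mem_inf.mp hf).2
    rcases FinQuiver.fibre_transitive hI hreal hx0 x.2 with h | h
    · exact (hinv ⟨x0, hx0⟩ x h).symm
    · exact hinv x ⟨x0, hx0⟩ h
  let φ : Q.InvRing K l β →ₐ[K] K :=
    (Pi.evalAlgHom K (fun _ : ↥(Q.MomentFiber K l β) => K) ⟨x0, hx0⟩).comp
      (Q.InvRing K l β).val
  refine ⟨AlgEquiv.ofBijective φ ⟨?_, ?_⟩⟩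
  · intro f g hfg
    apply Subtype.ext
    funext x
    rw [hconst f.1 f.2 x, hconst g.1 g.2 x]
    exact hfg
  · intro c
    exact ⟨algebraMap K _ c, by rw [AlgHom.commutes]; rfl⟩

end
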